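/- arXiv:2009.14382 — 3 statements merged into one kernel-verified Lean document; each statement's English description precedes it below -/
import Mathlib

section
/- Let K be a field of characteristic 0 and let (a_n)_{n≥0} be a rational sequence with values in K. Then the zero set {n ∈ ℕ : a_n = 0} is a virtually periodic subset of ℕ. -/
/-!
The proof is p-adic. A rational sequence eventually satisfies a linear recurrence with monic
characteristic polynomial `q` and `q(0) ≠ 0` (`exists_recurrence`), and all the data lie in a
countable subfield `F` of `K`.

*Embedding* (`exists_padic_embedding`). Let `x` be a transcendence basis of `F` over `ℤ`. The
finitely many elements consisting of `q(0)⁻¹` and the coefficients of `q` become integral over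
`ℤ[x]` after multiplication by some nonzero `h ∈ ℤ[x]`. Choose an integer point `c` with
`h(c) ≠ 0`, a prime `p` not dividing `h(c)`, and algebraically independent `tᵢ ∈ ℤ_p` with
`tᵢ ≡ cᵢ` mod `p`; these exist because `ℤ_p` is uncountable. Then `x ↦ t` is injective and sends
`h` to a unit, and it extends to an embedding of `F` into an algebraic closure of `ℚ_p` under which
the chosen elements become integral over `ℤ_p`.

*Reduction to a unit in a finite `ℤ_p`-algebra* (`finite_or_all_of_recurrence`). The sequence is
`n ↦ ℓ(θⁿ)` for a linear form `ℓ` on `E[X]/(q)`, where `θ` is the class of `X`. Both `θ` and `θ⁻¹`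
are integral over `ℤ_p`, so `T = ℤ_p[θ, θ⁻¹]` is a finite `ℤ_p`-module and `T/p²T` is a finite
ring. Hence `θ^r = 1 + p²β` for some `r > 0`, and for each residue `s` and each coordinate `φ` of
`ℓ`, `φ(θ^(s+rn)) = ∑ₖ C(n,k) p^(2k) φ(θ^s βᵏ)`.

*Zeros of binomial series* (`binomial_series_zeros`). As `k!` divides `pᵏ` in `ℤ_p`, such a series
truncates to polynomials over `ℤ_p` whose `j`-th coefficient is divisible by `pʲ`. If it has at
least `m` zeros, then modulo `pᵐ` such a polynomial has degree less than `m` but is divisible by a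
monic polynomial of degree `m`, so it vanishes modulo `pᵐ` (`dvd_coeff_of_many_roots`). Thus
infinitely many zeros force the sequence to vanish identically: on each class modulo `r` the zero
set is finite or everything.
-/

/-- A sequence `a : ℕ → F` is a *rational sequence* if there are polynomials
`f, g ∈ F[x]` with `g ≠ 0` such that `g(x) * ∑ aₙ xⁿ = f(x)` as formal power series. -/
def IsRationalSeq {F : Type*} [Field F] (a : ℕ → F) : Prop :=
  ∃ f g : Polynomial F, g ≠ 0 ∧
    (g : PowerSeries F) * PowerSeries.mk a = (f : PowerSeries F)

open Polynomial

/-! ### Zeros of p-adic binomial series -/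

/-- If `P` has `m` roots in a domain and all its coefficients of index at least `m` are divisible
by `c`, then every coefficient is: modulo `c`, the polynomial `P` has degree less than `m` and is
a multiple of the monic polynomial `∏ (X - t)` of degree `m`. -/
theorem dvd_coeff_of_many_roots {R : Type*} [CommRing R] [IsDomain R] (c : R) (P : R[X])
    (s : Finset R) (hs : ∀ t ∈ s, P.IsRoot t) (hP : ∀ j, s.card ≤ j → c ∣ P.coeff j) (j : ℕ) :
    c ∣ P.coeff j := by
  have hdvd : (∏ t ∈ s, (X - C t)) ∣ P := by
    by_cases h0 : P = 0
    · simp [h0]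
    have := (Multiset.prod_X_sub_C_dvd_iff_le_roots h0 s.val).2
      ((Multiset.le_iff_subset s.nodup).2 fun t ht => (mem_roots h0).2 (hs t ht))
    exact this
  obtain ⟨Q, hQ⟩ := hdvd
  let f := Ideal.Quotient.mk (Ideal.span {c})
  have hf : ∀ x, f x = 0 ↔ c ∣ x := fun x => by
    rw [Ideal.Quotient.eq_zero_iff_mem, Ideal.mem_span_singleton]
  suffices h : P.map f = 0 by
    rw [← hf, ← coeff_map, h, coeff_zero]
  by_cases hc : Subsingleton (R ⧸ Ideal.span {c})
  · exact Subsingleton.elim _ _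
  rw [not_subsingleton_iff_nontrivial] at hc
  have hmon : (∏ t ∈ s, (X - C t)).Monic := monic_prod_of_monic _ _ fun t _ => monic_X_sub_C t
  have hdeg : ((∏ t ∈ s, (X - C t)).map f).degree = (s.card : WithBot ℕ) := by
    rw [hmon.degree_map, degree_prod]
    simp
  have hlt : (P.map f).degree < (s.card : WithBot ℕ) := by
    rw [degree_lt_iff_coeff_zero]
    intro m hm
    rw [coeff_map, hf]
    exact hP m hm
  rw [hQ, Polynomial.map_mul] at hlt ⊢
  by_contra hne
  have hQ0 : Q.map f ≠ 0 := fun h => hne (by rw [h, mul_zero])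
  rw [mul_comm, (hmon.map f).degree_mul, hdeg] at hlt
  have h1 : (0 : WithBot ℕ) ≤ (Q.map f).degree := zero_le_degree_iff.2 hQ0
  exact absurd hlt (not_lt.2 (le_add_of_nonneg_left h1))

section

variable {p : ℕ} [hp : Fact p.Prime]

theorem factorial_dvd_pow (k : ℕ) : (k.factorial : ℤ_[p]) ∣ (p : ℤ_[p]) ^ k := by
  obtain ⟨u, hu⟩ : ∃ u : ℕ, k.factorial = p ^ padicValNat p k.factorial * u :=
    pow_padicValNat_dvd
  have hle : padicValNat p k.factorial ≤ k := by
    have h := sub_one_mul_padicValNat_factorial (p := p) k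
    have h2 := hp.out.two_le
    have h3 : 1 * padicValNat p k.factorial ≤ (p - 1) * padicValNat p k.factorial :=
      Nat.mul_le_mul_right _ (by omega)
    omega
  have hpu : ¬ p ∣ u := by
    rintro ⟨w, rfl⟩
    refine pow_succ_padicValNat_not_dvd (p := p) (Nat.factorial_ne_zero k) ⟨w, ?_⟩
    rw [pow_succ, mul_assoc]
    exact hu
  have hunit : IsUnit (u : ℤ_[p]) := by
    rw [PadicInt.isUnit_iff]
    refine le_antisymm (PadicInt.norm_le_one _) (not_lt.1 fun h => hpu ?_)
    have := (PadicInt.norm_int_lt_one_iff_dvd (p := p) (u : ℤ)).1 (by simpa using h)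
    exact_mod_cast this
  rw [hu]
  push_cast
  rw [hunit.mul_right_dvd]
  exact pow_dvd_pow _ hle

/-- A p-adic binomial series `∑ₖ C(n,k) p^(2k) dₖ` with infinitely many zeros `n ∈ ℕ` vanishes
for every `n ∈ ℕ`. -/
theorem binomial_series_zeros (d : ℕ → ℤ_[p]) (c : ℕ → ℤ_[p])
    (hc : ∀ n, c n = ∑ k ∈ Finset.range (n + 1), (n.choose k : ℤ_[p]) * (p ^ (2 * k) * d k)) :
    {n | c n = 0}.Finite ∨ ∀ n, c n = 0 := by
  by_cases hfin : {n | c n = 0}.Finite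
  · exact Or.inl hfin
  right
  intro n
  choose w hw using fun k => factorial_dvd_pow (p := p) k
  -- With `pᵏ = k! wₖ`, the term `C(n,k) p^(2k) dₖ` equals `pᵏ wₖ dₖ n(n-1)⋯(n-k+1)`, so `R N`
  -- is the series truncated at `k = N`; it is exact at every integer `m ≤ N`.
  let R : ℕ → ℤ_[p][X] := fun N =>
    ∑ k ∈ Finset.range (N + 1), C (p ^ k * w k * d k) * descPochhammer ℤ_[p] k
  have hR : ∀ N m, m ≤ N → (R N).eval (m : ℤ_[p]) = c m := by
    intro N m hm
    rw [hc, eval_finsetSum]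
    symm
    refine Finset.sum_subset_zero_on_sdiff (Finset.range_subset_range.2 (by omega)) ?_ ?_
    · intro k hk
      simp only [Finset.mem_sdiff, Finset.mem_range] at hk
      rw [eval_mul, descPochhammer_eval_eq_descFactorial,
        Nat.descFactorial_eq_zero_iff_lt.2 (by omega)]
      simp
    · intro k _
      rw [eval_mul, eval_C, descPochhammer_eval_eq_descFactorial,
        Nat.descFactorial_eq_factorial_mul_choose, two_mul, pow_add]
      nth_rewrite 2 [hw k]
      push_cast
      ring
  have hcoeff : ∀ N j, (p : ℤ_[p]) ^ j ∣ (R N).coeff j := by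
    intro N j
    rw [finsetSum_coeff]
    refine Finset.dvd_sum fun k _ => ?_
    rw [coeff_C_mul]
    rcases le_or_gt j k with h | h
    · rw [mul_assoc, mul_assoc]
      exact (pow_dvd_pow _ h).mul_right _
    · rw [coeff_eq_zero_of_natDegree_lt (by rwa [descPochhammer_natDegree]), mul_zero]
      exact dvd_zero _
  have hdiv : ∀ m : ℕ, (p : ℤ_[p]) ^ m ∣ c n := by
    intro m
    obtain ⟨s, hs, hcard⟩ := Set.Infinite.exists_subset_card_eq hfin m
    let N := max n (s.sup id)
    rw [← hR N n (le_max_left _ _), eval_eq_sum]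
    refine Finset.dvd_sum fun j _ => Dvd.dvd.mul_right ?_ _
    refine dvd_coeff_of_many_roots _ (R N) (s.map Nat.castEmbedding) ?_ ?_ j
    · intro t ht
      obtain ⟨i, hi, rfl⟩ := Finset.mem_map.1 ht
      rw [IsRoot.def, Nat.castEmbedding_apply,
        hR N i ((Finset.le_sup (f := id) hi).trans (le_max_right _ _))]
      exact hs hi
    · intro j hj
      rw [Finset.card_map, hcard] at hj
      exact (pow_dvd_pow _ hj).trans (hcoeff N j)
  by_contra hne
  have hmul : FiniteMultiplicity (p : ℤ_[p]) (c n) :=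
    FiniteMultiplicity.of_prime_left PadicInt.prime_p hne
  obtain ⟨m, hm⟩ := hmul
  exact hm (hdiv _)

/-! ### Powers of a unit in a finite ℤ_p-algebra -/

/-- The ring `T/p²T` is finite, so the image of a unit has finite order. -/
theorem exists_pow_eq_one_add {T : Type*} [CommRing T] [Algebra ℤ_[p] T] [Module.Finite ℤ_[p] T]
    (θ : Tˣ) : ∃ r > 0, ∃ β : T, (θ : T) ^ r = 1 + (p : T) ^ 2 * β := by
  let I : Ideal ℤ_[p] := RingHom.ker (PadicInt.toZModPow (p := p) 2)
  have hI : Finite (ℤ_[p] ⧸ I) := by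
    have e := RingHom.quotientKerEquivOfSurjective
      (ZMod.ringHom_surjective (PadicInt.toZModPow (p := p) 2))
    have : NeZero (p ^ 2) := ⟨pow_ne_zero _ hp.out.ne_zero⟩
    exact Finite.of_equiv _ e.symm.toEquiv
  let J : Ideal T := I.map (algebraMap ℤ_[p] T)
  have hfin : Module.Finite (ℤ_[p] ⧸ I) (T ⧸ J) :=
    Module.Finite.of_restrictScalars_finite ℤ_[p] _ _
  have hT : Finite (T ⧸ J) := Module.finite_of_finite (ℤ_[p] ⧸ I)
  obtain ⟨r, hr, h⟩ := (isOfFinOrder_of_finite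
    (Units.map (Ideal.Quotient.mk J).toMonoidHom θ)).exists_pow_eq_one
  refine ⟨r, hr, ?_⟩
  have h1 : Ideal.Quotient.mk J ((θ : T) ^ r - 1) = 0 := by
    have := congrArg Units.val h
    simpa [sub_eq_zero] using this
  rw [Ideal.Quotient.eq_zero_iff_mem] at h1
  simp only [J, I, PadicInt.ker_toZModPow, Ideal.map_span, Set.image_singleton, map_pow, map_natCast,
    Ideal.mem_span_singleton] at h1
  obtain ⟨β, hβ⟩ := h1
  exact ⟨β, by rw [← hβ]; ring⟩

theorem finite_or_all_of_linear {T : Type*} [CommRing T] [Algebra ℤ_[p] T]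
    (φ : T →ₗ[ℤ_[p]] ℤ_[p]) (θ β : T) (r : ℕ) (h : θ ^ r = 1 + (p : T) ^ 2 * β) (s : ℕ) :
    {n | φ (θ ^ (s + r * n)) = 0}.Finite ∨ ∀ n, φ (θ ^ (s + r * n)) = 0 := by
  refine binomial_series_zeros (fun k => φ (θ ^ s * β ^ k)) (fun n => φ (θ ^ (s + r * n))) ?_
  intro n
  rw [pow_add, pow_mul, h, add_comm 1, add_pow, Finset.mul_sum, map_sum]
  refine Finset.sum_congr rfl fun k _ => ?_
  rw [← smul_eq_mul (a := (n.choose k : ℤ_[p])), ← smul_eq_mul (a := (p : ℤ_[p]) ^ (2 * k)),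
    ← map_smul, ← map_smul]
  congr 1
  simp only [Algebra.smul_def, map_natCast, map_pow, one_pow]
  ring

/-- The sequence `n ↦ ℓ(θⁿ)` vanishes on each residue class modulo a suitable `r` either finitely
often or identically. The range of `ℓ` is a free `ℤ_p`-module of finite rank, so it suffices to
treat its coordinates. -/
theorem finite_or_all_of_unit {T E : Type*} [CommRing T] [Algebra ℤ_[p] T] [Module.Finite ℤ_[p] T]
    [AddCommGroup E] [Module ℤ_[p] E] [Module.IsTorsionFree ℤ_[p] E]
    (ℓ : T →ₗ[ℤ_[p]] E) (θ : Tˣ) :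
    ∃ r > 0, ∀ s, {n | ℓ ((θ : T) ^ (s + r * n)) = 0}.Finite ∨
      ∀ n, ℓ ((θ : T) ^ (s + r * n)) = 0 := by
  obtain ⟨r, hr, β, h⟩ := exists_pow_eq_one_add (p := p) θ
  refine ⟨r, hr, fun s => ?_⟩
  let W := LinearMap.range ℓ
  let B := Module.Free.chooseBasis ℤ_[p] W
  have key : ∀ x, ℓ x = 0 ↔ ∀ i, (B.coord i ∘ₗ ℓ.rangeRestrict) x = 0 := by
    intro x
    rw [show ℓ x = 0 ↔ ℓ.rangeRestrict x = 0 by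
      rw [← Subtype.coe_inj]; rfl]
    exact (B.forall_coord_eq_zero_iff).symm
  by_cases hall : ∀ i, ∀ n, (B.coord i ∘ₗ ℓ.rangeRestrict) ((θ : T) ^ (s + r * n)) = 0
  · exact Or.inr fun n => (key _).2 fun i => hall i n
  · left
    push Not at hall
    obtain ⟨i, n, hn⟩ := hall
    refine ((finite_or_all_of_linear _ (θ : T) β r h s).resolve_right
      fun hz => hn (hz n)).subset ?_
    intro m hm
    exact (key _).1 hm i

/-- The case of a recurrence whose characteristic polynomial `q` has coefficients integral over
`ℤ_p` and a constant term with integral inverse. -/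
theorem finite_or_all_of_recurrence {E : Type*} [Field E] [Algebra ℤ_[p] E]
    [Module.IsTorsionFree ℤ_[p] E] (q : E[X]) (hq : q.Monic) (hq0 : q.coeff 0 ≠ 0)
    (hint : ∀ i, IsIntegral ℤ_[p] (q.coeff i)) (hint0 : IsIntegral ℤ_[p] (q.coeff 0)⁻¹)
    (b : ℕ → E) (hb : ∀ n, ∑ i ∈ Finset.range (q.natDegree + 1), q.coeff i * b (n + i) = 0) :
    ∃ r > 0, ∀ s, {n | b (s + r * n) = 0}.Finite ∨ ∀ n, b (s + r * n) = 0 := by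
  -- The linear form `Xⁿ ↦ b n` kills the ideal `(q)`, by the recurrence.
  let L : E[X] →ₗ[E] E := (Polynomial.basisMonomials E).constr E b
  have hL : ∀ n, L (X ^ n) = b n := fun n => by
    have := (Polynomial.basisMonomials E).constr_basis E b n
    rw [coe_basisMonomials] at this
    rw [← monomial_one_right_eq_X_pow]
    exact this
  have hLq : ∀ P : E[X], L (P * q) = 0 := by
    intro P
    induction P using Polynomial.induction_on' with
    | add P Q hP hQ => rw [add_mul, map_add, hP, hQ, add_zero]
    | monomial n c =>
      rw [← C_mul_X_pow_eq_monomial, mul_assoc, ← smul_eq_C_mul, map_smul]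
      have : L (X ^ n * q) = 0 := by
        rw [← hb n]
        conv_lhs => rw [q.as_sum_range_C_mul_X_pow]
        rw [Finset.mul_sum, map_sum]
        refine Finset.sum_congr rfl fun i _ => ?_
        rw [show X ^ n * (C (q.coeff i) * X ^ i) = q.coeff i • X ^ (n + i) by
          rw [smul_eq_C_mul]; ring, map_smul, hL, smul_eq_mul]
      rw [this, smul_zero]
  let A := AdjoinRoot q
  let θ : A := AdjoinRoot.root q
  let ℓ : A →ₗ[E] E := Submodule.liftQ ((Ideal.span {q}).restrictScalars E) L (by
    intro P hP
    obtain ⟨Q, rfl⟩ := Ideal.mem_span_singleton'.1 (show P ∈ Ideal.span {q} from hP)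
    exact hLq Q)
  have hℓ : ∀ n, ℓ (θ ^ n) = b n := fun n => by
    rw [← hL]
    have : θ ^ n = AdjoinRoot.mk q (X ^ n) := by rw [map_pow, AdjoinRoot.mk_X]
    rw [this]
    rfl
  have hroot : aeval θ q = 0 := by
    rw [AdjoinRoot.aeval_eq, AdjoinRoot.mk_self]
  have hcoef : ∀ x : E, IsIntegral ℤ_[p] x → IsIntegral ℤ_[p] (algebraMap E A x) :=
    fun x hx => hx.algebraMap
  have hθ : IsIntegral ℤ_[p] θ := by
    -- If `q = 1` then `E[X]/(q)` is the zero ring.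
    by_cases hd : q.natDegree = 0
    · have h1 := hq.natDegree_eq_zero.1 hd
      have : Subsingleton A := by
        have h2 : aeval θ q = 1 := (congrArg (aeval θ) h1).trans (map_one _)
        exact subsingleton_of_zero_eq_one (hroot.symm.trans h2)
      rw [Subsingleton.elim θ 0]
      exact isIntegral_zero
    have : Nontrivial A := AdjoinRoot.nontrivial q (by
      rw [degree_eq_natDegree hq.ne_zero]; exact_mod_cast hd)
    refine IsIntegral.of_aeval_monic_of_isIntegral_coeff (hq.map (algebraMap E A)) ?_ ?_ ?_
    · rwa [hq.natDegree_map]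
    · rw [eval_map_algebraMap, hroot]
      exact isIntegral_zero
    · intro i
      rw [coeff_map]
      exact hcoef _ (hint i)
  -- From `q = X * divX q + q(0)`, this is the inverse of `θ`.
  let θ' : A := - algebraMap E A (q.coeff 0)⁻¹ * aeval θ q.divX
  have hθ' : IsIntegral ℤ_[p] θ' := by
    refine IsIntegral.mul (hcoef _ hint0).neg ?_
    rw [aeval_eq_sum_range]
    refine IsIntegral.sum _ fun i _ => ?_
    rw [Algebra.smul_def, coeff_divX]
    exact (hcoef _ (hint _)).mul (hθ.pow i)
  have hmul : θ * θ' = 1 := by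
    have h := (congrArg (aeval θ) (divX_mul_X_add q)).trans hroot
    rw [map_add, map_mul, aeval_X, aeval_C] at h
    have h2 : aeval θ q.divX * θ = - algebraMap E A (q.coeff 0) := eq_neg_of_add_eq_zero_left h
    have h3 : algebraMap E A (q.coeff 0)⁻¹ * algebraMap E A (q.coeff 0) = 1 := by
      rw [← map_mul, inv_mul_cancel₀ hq0, map_one]
    calc θ * θ' = - algebraMap E A (q.coeff 0)⁻¹ * (aeval θ q.divX * θ) := by
          simp only [θ']; ring
      _ = 1 := by rw [h2, neg_mul_neg, h3]
  let T := Algebra.adjoin ℤ_[p] ({θ, θ'} : Set A)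
  have hT : Module.Finite ℤ_[p] T := Module.Finite.of_fg
    (fg_adjoin_of_finite (Set.toFinite _) (by rintro x (rfl | rfl) <;> assumption))
  let u : Tˣ := Units.mkOfMulEqOne ⟨θ, Algebra.subset_adjoin (by simp)⟩
    ⟨θ', Algebra.subset_adjoin (by simp)⟩ (Subtype.ext hmul)
  obtain ⟨r, hr, h⟩ := finite_or_all_of_unit (p := p)
    ((ℓ.restrictScalars ℤ_[p]) ∘ₗ T.val.toLinearMap) u
  refine ⟨r, hr, fun s => ?_⟩
  have he : ∀ n, ((ℓ.restrictScalars ℤ_[p]) ∘ₗ T.val.toLinearMap) ((u : T) ^ n) = b n := by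
    intro n
    rw [← hℓ]
    rfl
  simpa only [he] using h s

end

/-! ### Residue classes and recurrences -/

theorem virtually_periodic_of_classes {E : Type*} [Zero E] (b : ℕ → E) (r : ℕ) (hr : 0 < r)
    (h : ∀ s, {n | b (s + r * n) = 0}.Finite ∨ ∀ n, b (s + r * n) = 0) :
    ∃ N, ∀ n > N, (b n = 0 ↔ b (n + r) = 0) := by
  have h1 : ∀ s, ∃ M, ∀ n > M, (b (s + r * n) = 0 ↔ b (s + r * (n + 1)) = 0) := by
    intro s
    rcases h s with hf | ha
    · obtain ⟨M, hM⟩ := hf.bddAbove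
      refine ⟨M, fun n hn => ?_⟩
      have h2 : ∀ m > M, b (s + r * m) ≠ 0 := fun m hm hz => absurd (hM hz) (not_le.2 hm)
      exact iff_of_false (h2 n hn) (h2 _ (by omega))
    · exact ⟨0, fun n _ => iff_of_true (ha _) (ha _)⟩
  choose M hM using h1
  let M' := (Finset.range r).sup M
  refine ⟨r * (M' + 1), fun n hn => ?_⟩
  have hs : n % r < r := Nat.mod_lt _ hr
  have hle : M (n % r) ≤ M' := Finset.le_sup (Finset.mem_range.2 hs)
  have hdiv : M' + 1 ≤ n / r := (Nat.le_div_iff_mul_le hr).2 (by rw [mul_comm]; exact hn.le)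
  have := hM (n % r) (n / r) (by omega)
  rwa [mul_add, mul_one, ← add_assoc, Nat.mod_add_div] at this

/-- The characteristic polynomial is the normalized reverse of `g`; its constant term is nonzero
because the leading coefficient of `g` is. -/
theorem exists_recurrence {K : Type*} [Field K] (a : ℕ → K) (f g : K[X]) (hg : g ≠ 0)
    (h : (g : PowerSeries K) * PowerSeries.mk a = (f : PowerSeries K)) :
    ∃ q : K[X], q.Monic ∧ q.coeff 0 ≠ 0 ∧ ∃ N, ∀ n,
      ∑ i ∈ Finset.range (q.natDegree + 1), q.coeff i * a (N + (n + i)) = 0 := by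
  have hr : g.reverse ≠ 0 := by rwa [Ne, reverse_eq_zero]
  have hl : (g.reverse.leadingCoeff)⁻¹ ≠ 0 := inv_ne_zero (leadingCoeff_ne_zero.2 hr)
  refine ⟨C (g.reverse.leadingCoeff)⁻¹ * g.reverse, ?_, ?_, f.natDegree + 1, fun n => ?_⟩
  · rw [mul_comm]; exact monic_mul_leadingCoeff_inv hr
  · rw [coeff_C_mul, coeff_zero_reverse]
    exact mul_ne_zero hl (leadingCoeff_ne_zero.2 hg)
  rw [natDegree_C_mul hl]
  simp only [coeff_C_mul, mul_assoc]
  rw [← Finset.mul_sum]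
  -- This coefficient has index above `deg f`, so it vanishes, and index at least `deg g`, so all of
  -- `g` contributes to it.
  have hc := congrArg (PowerSeries.coeff (f.natDegree + 1 + n + g.natDegree)) h
  rw [PowerSeries.coeff_mul, Polynomial.coeff_coe,
    coeff_eq_zero_of_natDegree_lt (by omega : f.natDegree < f.natDegree + 1 + n + g.natDegree),
    Finset.Nat.sum_antidiagonal_eq_sum_range_succ_mk] at hc
  simp only [Polynomial.coeff_coe, PowerSeries.coeff_mk] at hc
  have h1 : ∑ i ∈ Finset.range (g.natDegree + 1),
      g.coeff i * a (f.natDegree + 1 + n + g.natDegree - i) = 0 := by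
    rw [← hc]
    refine Finset.sum_subset (Finset.range_subset_range.2 (by omega)) fun i _ hi => ?_
    rw [coeff_eq_zero_of_natDegree_lt (by simpa using hi), zero_mul]
  have h2 : ∑ i ∈ Finset.range (g.natDegree + 1),
      g.reverse.coeff i * a (f.natDegree + 1 + (n + i)) = 0 := by
    rw [← h1, ← Finset.sum_range_reflect]
    refine Finset.sum_congr rfl fun i hi => ?_
    have hi' : i ≤ g.natDegree := by simpa [Nat.lt_succ_iff] using hi
    rw [coeff_reverse, revAt_le (by omega)]
    congr 2 <;> omega
  have h3 : ∑ i ∈ Finset.range (g.reverse.natDegree + 1),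
      g.reverse.coeff i * a (f.natDegree + 1 + (n + i)) = 0 := by
    rw [← h2]
    refine Finset.sum_subset (Finset.range_subset_range.2
      (by have := reverse_natDegree_le g; omega)) fun i _ hi => ?_
    rw [coeff_eq_zero_of_natDegree_lt (by simpa using hi), zero_mul]
  rw [h3, mul_zero]

/-! ### Embedding a countable field p-adically -/

theorem exists_algebraicIndependent_padicInt (p : ℕ) [Fact p.Prime] :
    ∃ y : ℕ → ℤ_[p], AlgebraicIndependent ℤ y := by
  obtain ⟨s, hs⟩ := exists_isTranscendenceBasis ℤ ℤ_[p]
  suffices hinf : Infinite s from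
    ⟨_, hs.1.comp (Infinite.natEmbedding s) (Infinite.natEmbedding s).injective⟩
  by_contra hfin
  rw [not_infinite_iff_finite] at hfin
  have halg := hs.isAlgebraic
  have hpoly : Countable (MvPolynomial s ℤ) := Cardinal.mk_le_aleph0_iff.1
    (MvPolynomial.cardinalMk_le_max.trans (by simp))
  have hcount : Countable (Algebra.adjoin ℤ (Set.range (Subtype.val : s → ℤ_[p]))) :=
    Function.Surjective.countable hs.1.aevalEquiv.surjective
  have h1 : Cardinal.mk ℤ_[p] ≤ Cardinal.aleph0 :=
    (Algebra.IsAlgebraic.cardinalMk_le_max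
      (Algebra.adjoin ℤ (Set.range (Subtype.val : s → ℤ_[p]))) ℤ_[p]).trans
      (max_le (Cardinal.mk_le_aleph0_iff.2 hcount) le_rfl)
  have h2 : Countable ℤ_[p] := Cardinal.mk_le_aleph0_iff.1 h1
  have h3 : Countable ℚ_[p] := by
    refine Function.Surjective.countable
      (f := fun x : ℤ_[p] × ℤ_[p] => (x.1 : ℚ_[p]) / (x.2 : ℚ_[p])) fun z => ?_
    obtain ⟨x, y, -, h⟩ := IsFractionRing.div_surjective ℤ_[p] z
    exact ⟨(x, y), h⟩
  have h4 := continuum_le_cardinal_of_nontriviallyNormedField ℚ_[p]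
  exact absurd (h4.trans (Cardinal.mk_le_aleph0_iff.2 h3)) (not_le.2 Cardinal.aleph0_lt_continuum)

/-- A polynomial ring over `ℤ` in countably many variables embeds into some `ℤ_p` with a
prescribed nonzero element `h` becoming a unit. -/
theorem exists_injective_to_padicInt {ι : Type*} [Countable ι] (h : MvPolynomial ι ℤ)
    (hh : h ≠ 0) : ∃ (p : ℕ) (_ : Fact p.Prime) (φ : MvPolynomial ι ℤ →+* ℤ_[p]),
      Function.Injective φ ∧ IsUnit (φ h) := by
  obtain ⟨c, hc⟩ : ∃ c : ι → ℤ, MvPolynomial.eval c h ≠ 0 := by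
    by_contra hcon
    push Not at hcon
    exact hh (MvPolynomial.funext fun x => by rw [hcon x, map_zero])
  obtain ⟨p, hle, hp⟩ := Nat.exists_infinite_primes ((MvPolynomial.eval c h).natAbs + 1)
  have hpf : Fact p.Prime := ⟨hp⟩
  obtain ⟨y, hy⟩ := exists_algebraicIndependent_padicInt p
  obtain ⟨e, he⟩ := exists_injective_nat ι
  -- The elements `tᵢ = p yᵢ + cᵢ` stay algebraically independent and reduce to `cᵢ` modulo `p`.
  have ht : AlgebraicIndependent ℤ fun i =>
      aeval (y (e i)) (C (p : ℤ) * X + C (c i) : ℤ[X]) := by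
    refine (hy.comp e he).polynomial_aeval_of_transcendental fun i => ?_
    have hp0 : (p : ℤ) ≠ 0 := by exact_mod_cast hp.ne_zero
    refine Polynomial.transcendental _ ?_ ?_
    · rw [natDegree_linear hp0]
      exact one_ne_zero
    · rw [leadingCoeff_linear hp0]
      exact mem_nonZeroDivisors_of_ne_zero hp0
  refine ⟨p, hpf, (MvPolynomial.aeval _).toRingHom, ht, ?_⟩
  have hker : PadicInt.toZMod (MvPolynomial.aeval (fun i =>
      aeval (y (e i)) (C (p : ℤ) * X + C (c i) : ℤ[X])) h)
      = ((MvPolynomial.eval c h : ℤ) : ZMod p) := by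
    have : (PadicInt.toZMod (p := p)).comp (MvPolynomial.aeval (R := ℤ) (fun i =>
      aeval (y (e i)) (C (p : ℤ) * X + C (c i) : ℤ[X]))).toRingHom
      = (Int.castRingHom (ZMod p)).comp (MvPolynomial.eval c) := by
      refine MvPolynomial.ringHom_ext (fun r => by simp) fun i => ?_
      simp
    exact congrArg (fun f => f h) this
  by_contra hnu
  have hmem : MvPolynomial.aeval (fun i =>
      aeval (y (e i)) (C (p : ℤ) * X + C (c i) : ℤ[X])) h ∈
      RingHom.ker (PadicInt.toZMod (p := p)) := by
    rw [PadicInt.ker_toZMod]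
    exact (IsLocalRing.mem_maximalIdeal _).2 hnu
  rw [RingHom.mem_ker, hker, ZMod.intCast_zmod_eq_zero_iff_dvd] at hmem
  have := Nat.le_of_dvd (Int.natAbs_pos.2 hc) (Int.natCast_dvd.1 hmem)
  omega

theorem padicInt_algebraMap_injective (p : ℕ) [Fact p.Prime] :
    Function.Injective (algebraMap ℤ_[p] (AlgebraicClosure ℚ_[p])) := by
  rw [IsScalarTower.algebraMap_eq ℤ_[p] ℚ_[p] (AlgebraicClosure ℚ_[p])]
  exact (algebraMap ℚ_[p] (AlgebraicClosure ℚ_[p])).injective.comp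
    (IsFractionRing.injective ℤ_[p] ℚ_[p])

/-- A variant of Cassels' embedding theorem, with an algebraic closure of `ℚ_p` as target: only
integrality of finitely many given elements is asked for. -/
theorem exists_padic_embedding {K : Type*} [Field K] [CharZero K] [Countable K] (S : Finset K) :
    ∃ (p : ℕ) (_ : Fact p.Prime) (ψ : K →+* AlgebraicClosure ℚ_[p]),
      ∀ s ∈ S, IsIntegral ℤ_[p] (ψ s) := by
  obtain ⟨s, hs⟩ := exists_isTranscendenceBasis ℤ K
  let B := Algebra.adjoin ℤ (Set.range (Subtype.val : s → K))
  have halg : Algebra.IsAlgebraic B K := hs.isAlgebraic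
  obtain ⟨b, hb, hint⟩ := Algebra.IsAlgebraic.exists_integral_multiples B S
  obtain ⟨p, hp, φ, hφ, hu⟩ := exists_injective_to_padicInt (hs.1.aevalEquiv.symm b)
    (by simpa using hb)
  refine ⟨p, hp, ?_⟩
  let φB : B →+* ℤ_[p] := φ.comp hs.1.aevalEquiv.symm.toRingEquiv.toRingHom
  have hφB : Function.Injective φB := hφ.comp hs.1.aevalEquiv.symm.injective
  let : Algebra B (AlgebraicClosure ℚ_[p]) :=
    ((algebraMap ℤ_[p] (AlgebraicClosure ℚ_[p])).comp φB).toAlgebra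
  have hinj : Function.Injective (algebraMap B (AlgebraicClosure ℚ_[p])) :=
    (padicInt_algebraMap_injective p).comp hφB
  have : FaithfulSMul B (AlgebraicClosure ℚ_[p]) :=
    (faithfulSMul_iff_algebraMap_injective _ _).2 hinj
  let ψ : K →ₐ[B] AlgebraicClosure ℚ_[p] := IsAlgClosed.lift
  refine ⟨ψ, fun x hx => ?_⟩
  have h1 : IsIntegral B (ψ (b • x)) := (hint x hx).map ψ
  have h2 : IsIntegral ℤ_[p] (ψ (b • x)) := by
    obtain ⟨P, hP, hP0⟩ := h1
    exact ⟨P.map φB, hP.map _, by rw [eval₂_map]; exact hP0⟩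
  rw [Algebra.smul_def, map_mul, ψ.commutes] at h2
  obtain ⟨u, hu⟩ := hu
  have h3 : (algebraMap B (AlgebraicClosure ℚ_[p]) b) = algebraMap ℤ_[p] _ (u : ℤ_[p]) := by
    rw [hu]; rfl
  have h4 := (isIntegral_algebraMap (R := ℤ_[p]) (A := AlgebraicClosure ℚ_[p])
    (x := ((u⁻¹ : ℤ_[p]ˣ) : ℤ_[p]))).mul h2
  rwa [h3, ← mul_assoc, ← map_mul, Units.inv_mul, map_one, one_mul] at h4

/-! ### Conclusion -/

theorem skolem_mahler_lech_of_countable {K : Type*} [Field K] [CharZero K] [Countable K]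
    (a : ℕ → K) (f g : K[X]) (hg : g ≠ 0)
    (h : (g : PowerSeries K) * PowerSeries.mk a = (f : PowerSeries K)) :
    ∃ N r : ℕ, 0 < r ∧ ∀ n > N, (a n = 0 ↔ a (n + r) = 0) := by
  classical
  obtain ⟨q, hq, hq0, N, hN⟩ := exists_recurrence a f g hg h
  -- `q.coeffs` lists only nonzero coefficients, so `0` is added separately.
  obtain ⟨p, hp, ψ, hψ⟩ := exists_padic_embedding
    (insert 0 (insert (q.coeff 0)⁻¹ q.coeffs))
  have : FaithfulSMul ℤ_[p] (AlgebraicClosure ℚ_[p]) :=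
    (faithfulSMul_iff_algebraMap_injective _ _).2 (padicInt_algebraMap_injective p)
  obtain ⟨r, hr, hcl⟩ := finite_or_all_of_recurrence (p := p) (q.map ψ) (hq.map ψ)
    (by rwa [coeff_map, Ne, map_eq_zero])
    (fun i => by
      rw [coeff_map]
      refine hψ _ ?_
      by_cases hi : q.coeff i = 0
      · simp [hi]
      · exact Finset.mem_insert_of_mem (Finset.mem_insert_of_mem (coeff_mem_coeffs hi)))
    (by
      rw [coeff_map, ← map_inv₀]
      exact hψ _ (by simp))
    (fun n => ψ (a (N + n)))
    (fun n => by
      rw [natDegree_map]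
      simp only [coeff_map, ← map_mul]
      rw [← map_sum, hN n, map_zero])
  obtain ⟨M, hM⟩ := virtually_periodic_of_classes (fun n => ψ (a (N + n))) r hr hcl
  refine ⟨N + M, r, hr, fun n hn => ?_⟩
  have := hM (n - N) (by omega)
  simp only [map_eq_zero] at this
  rwa [show N + (n - N) = n by omega, show N + (n - N + r) = n + r by omega] at this

/-- Skolem–Mahler–Lech: the zero set of a rational sequence over a field of
characteristic zero is virtually periodic. -/
theorem skolem_mahler_lech {K : Type*} [Field K] [CharZero K]
    (a : ℕ → K) (ha : IsRationalSeq a) :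
    ∃ N r : ℕ, 0 < r ∧ ∀ n > N, (a n = 0 ↔ a (n + r) = 0) := by
  obtain ⟨f, g, hg, h⟩ := ha
  -- Descend to the countable field generated by the sequence and the coefficients of `f` and `g`.
  let S : Set K := Set.range a ∪ (Set.range f.coeff ∪ Set.range g.coeff)
  have hS : S.Countable := (Set.countable_range _).union
    ((Set.countable_range _).union (Set.countable_range _))
  let F := Subfield.closure S
  have hF : Countable F := Cardinal.mk_le_aleph0_iff.1
    ((Subfield.cardinalMk_closure_le_max S).trans (max_le hS.le_aleph0 le_rfl))
  let a' : ℕ → F := fun n => ⟨a n, Subfield.subset_closure (Or.inl ⟨n, rfl⟩)⟩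
  obtain ⟨f', hf'⟩ : ∃ f' : F[X], f'.map F.subtype = f :=
    (mem_lifts f).1 ((lifts_iff_coeff_lifts f).2 fun n =>
      ⟨⟨f.coeff n, Subfield.subset_closure (Or.inr (Or.inl ⟨n, rfl⟩))⟩, rfl⟩)
  obtain ⟨g', hg'⟩ : ∃ g' : F[X], g'.map F.subtype = g :=
    (mem_lifts g).1 ((lifts_iff_coeff_lifts g).2 fun n =>
      ⟨⟨g.coeff n, Subfield.subset_closure (Or.inr (Or.inr ⟨n, rfl⟩))⟩, rfl⟩)
  have h' : (g' : PowerSeries F) * PowerSeries.mk a' = (f' : PowerSeries F) := by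
    ext n
    apply_fun PowerSeries.coeff n at h
    rw [← hf', ← hg'] at h
    simp only [PowerSeries.coeff_mul, Polynomial.coeff_coe, PowerSeries.coeff_mk, coeff_map] at h ⊢
    refine Eq.trans ?_ h
    simp [a']
  obtain ⟨N, r, hr, hN⟩ := skolem_mahler_lech_of_countable a' f' g'
    (by rintro rfl; exact hg (by rw [← hg', Polynomial.map_zero])) h'
  refine ⟨N, r, hr, fun n hn => ?_⟩
  have := hN n hn
  simpa only [a', ← Subtype.coe_inj, ZeroMemClass.coe_zero] using this
end

section
/- Let K be a field of characteristic 0, let L be a finite Galois extension of K, and let (a_n)_{n≥0} be a rational sequence with values in L. Let P_n(T) ∈ K[T] denote the minimal polynomial of a_n over K. Then the sequence (P_n(T))_{n≥0} is a rational sequence in the polynomial ring L[T]: there exist F ∈ (L[T])[x] and G ∈ L[x] with G ≠ 0 such that G(x)·∑_{n≥0} P_n(T) x^n = F(x) as formal power series in x with coefficients in L[T]. -/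
open Polynomial

/-! ### A p-adic vanishing criterion -/

/-- A polynomial whose `j`-th coefficient is divisible by `q ^ (j + m)` and which has `#s` known
roots takes only values divisible by `q ^ (m + #s)`: dividing out one root raises the divisibility
of every coefficient by one power of `q`. -/
theorem pow_dvd_eval_of_roots {S : Type*} [CommRing S] [IsDomain S] (q : S) (s : Finset S) :
    ∀ (m : ℕ) (R : S[X]), (∀ t ∈ s, R.IsRoot t) → (∀ j, q ^ (j + m) ∣ R.coeff j) →
      ∀ x, q ^ (m + s.card) ∣ R.eval x := by
  classical
  induction s using Finset.induction_on with
  | empty =>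
    intro m R _ hR x
    rw [Polynomial.eval_eq_sum_range]
    refine Finset.dvd_sum fun j _ => Dvd.dvd.mul_right ((pow_dvd_pow q ?_).trans (hR j)) _
    simp
  | insert t s hts ih =>
    intro m R hroot hR x
    obtain ⟨Q, rfl⟩ := Polynomial.dvd_iff_isRoot.mpr (hroot t (Finset.mem_insert_self t s))
    have hQroot : ∀ u ∈ s, Q.IsRoot u := by
      intro u hu
      have h := hroot u (Finset.mem_insert_of_mem hu)
      rw [Polynomial.IsRoot, eval_mul, mul_eq_zero] at h
      refine h.resolve_left fun h0 => hts ?_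
      have : u = t := by simpa [sub_eq_zero] using h0
      exact this ▸ hu
    have hcoeff : ∀ k, Q.coeff k = ((X - C t) * Q).coeff (k + 1) + t * Q.coeff (k + 1) := by
      intro k
      simp [sub_mul, coeff_X_mul, coeff_C_mul]
    have hQ : ∀ j, q ^ (j + (m + 1)) ∣ Q.coeff j := by
      -- descending induction on the index, starting above the degree of `Q`
      have key : ∀ i j, Q.natDegree < j + i → q ^ (j + (m + 1)) ∣ Q.coeff j := by
        intro i
        induction i with
        | zero =>
          intro j hj
          rw [coeff_eq_zero_of_natDegree_lt (by simpa using hj)]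
          exact dvd_zero _
        | succ i ihi =>
          intro j hj
          rw [hcoeff j]
          refine dvd_add ?_ (Dvd.dvd.mul_left ?_ _)
          · have := hR (j + 1)
            rwa [show j + 1 + m = j + (m + 1) by ring] at this
          · exact (pow_dvd_pow q (by omega)).trans (ihi (j + 1) (by omega))
      exact fun j => key (Q.natDegree + 1) j (by omega)
    have := ih (m + 1) Q hQroot hQ x
    rw [Finset.card_insert_of_notMem hts, eval_mul]
    refine Dvd.dvd.mul_left ?_ _
    rwa [show m + (s.card + 1) = m + 1 + s.card by ring]

/-- Up to a factor prime to `p`, `k!` divides `p ^ k`, uniformly for `k ≤ K`. -/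
theorem exists_coprime_factorial_dvd {p : ℕ} (hp : p.Prime) (K : ℕ) :
    ∃ m : ℕ, m.Coprime p ∧ ∀ k ≤ K, k.factorial ∣ m * p ^ k := by
  refine ⟨ordCompl[p] K.factorial, (Nat.coprime_ordCompl hp K.factorial_ne_zero).symm, ?_⟩
  intro k hk
  rw [← Nat.ordProj_mul_ordCompl_eq_self k.factorial p, mul_comm]
  refine mul_dvd_mul (Nat.ordCompl_dvd_ordCompl_of_dvd (Nat.factorial_dvd_factorial hk) p) ?_
  refine pow_dvd_pow p ?_
  have := Fact.mk hp
  rw [Nat.factorization_def _ hp]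
  exact padicValNat_factorial_le p k

/-- An interpolation `b n = ∑ k, (n choose k) p^(2k) w k` with infinitely many zeros vanishes
identically. Since `k!` contributes at most `p ^ k` to the denominators, on any finite range of `n`
a multiple of `b n` by an integer prime to `p` is the value at `n` of a polynomial satisfying the
hypotheses of `pow_dvd_eval_of_roots`, with as many roots as desired. -/
theorem eq_zero_of_infinite_zeros {S : Type*} [CommRing S] [IsDomain S] [CharZero S]
    {p : ℕ} (hp : p.Prime) (hsep : ∀ x : S, (∀ k, (p : S) ^ k ∣ x) → x = 0)
    (b w : ℕ → S)
    (hb : ∀ n, b n = ∑ k ∈ Finset.range (n + 1), (n.choose k : S) * (p : S) ^ (2 * k) * w k)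
    (hinf : {n | b n = 0}.Infinite) (n : ℕ) : b n = 0 := by
  classical
  refine hsep _ fun J => ?_
  obtain ⟨s, hs, hsJ⟩ := hinf.exists_subset_card_eq J
  set K := n + s.sup id with hK
  obtain ⟨m, hm, hmk⟩ := exists_coprime_factorial_dvd hp K
  choose! e he using hmk
  set R : S[X] := ∑ k ∈ Finset.range (K + 1),
    C ((p : S) ^ k * ((e k : S) * w k)) * descPochhammer S k with hR
  have heval : ∀ i ≤ K, R.eval (i : S) = m * b i := by
    intro i hi
    have hb' : b i = ∑ k ∈ Finset.range (K + 1), (i.choose k : S) * (p : S) ^ (2 * k) * w k := by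
      rw [hb]
      refine Finset.sum_subset (Finset.range_mono (by omega)) fun k _ hk => ?_
      rw [Nat.choose_eq_zero_of_lt (by rw [Finset.mem_range] at hk; omega)]
      simp
    rw [hb', hR, eval_finsetSum, Finset.mul_sum]
    refine Finset.sum_congr rfl fun k hk => ?_
    have hk' : k ≤ K := by simpa [Nat.lt_succ_iff] using hk
    rw [eval_mul, eval_C, descPochhammer_eval_eq_descFactorial,
      Nat.descFactorial_eq_factorial_mul_choose]
    have h1 : (m : S) * (p : S) ^ k = (k.factorial : S) * (e k : S) := by
      exact_mod_cast he k hk'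
    push_cast
    linear_combination (-(p : S) ^ k * w k * (i.choose k : S)) * h1
  have hdvd : (p : S) ^ (0 + (s.image (Nat.cast : ℕ → S)).card) ∣ R.eval (n : S) := by
    refine pow_dvd_eval_of_roots _ _ 0 R ?_ ?_ _
    · intro t ht
      obtain ⟨i, hi, rfl⟩ := Finset.mem_image.mp ht
      have hiK : i ≤ K := (Finset.le_sup (f := id) hi).trans (by omega)
      have hi0 : b i = 0 := hs hi
      rw [Polynomial.IsRoot, heval i hiK, hi0, mul_zero]
    · intro j
      rw [hR, finsetSum_coeff]
      refine Finset.dvd_sum fun k _ => ?_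
      rw [coeff_C_mul]
      by_cases hjk : j ≤ k
      · exact Dvd.dvd.mul_right (Dvd.dvd.mul_right (pow_dvd_pow _ (by omega)) _) _
      · rw [coeff_eq_zero_of_natDegree_lt (by rw [descPochhammer_natDegree]; omega), mul_zero]
        exact dvd_zero _
  rw [Finset.card_image_of_injective _ Nat.cast_injective, hsJ, zero_add,
    heval n (by omega)] at hdvd
  have hcop : IsCoprime ((p : S) ^ J) (m : S) := by
    have : IsCoprime (p : ℤ) (m : ℤ) := Nat.isCoprime_iff_coprime.mpr hm.symm
    have := this.map (Int.castRingHom S)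
    simpa using this.pow_left (m := J)
  exact hcop.dvd_of_dvd_mul_left hdvd

/-! ### Linear recurrences through the shift operator -/

/-- The shift operator `(a n) ↦ (a (n + 1))` on `A`-valued sequences, as an `S`-linear map. A linear
recurrence with characteristic polynomial `χ` is the equation `aeval (seqShift S A) χ a = 0`. -/
abbrev seqShift (S A : Type*) [CommRing S] [CommRing A] [Algebra S A] :
    Module.End S (ℕ → A) := LinearMap.funLeft S A Nat.succ

theorem seqShift_pow_apply (S : Type*) {A : Type*} [CommRing S] [CommRing A] [Algebra S A]
    (k : ℕ) (a : ℕ → A) (n : ℕ) : (seqShift S A ^ k) a n = a (n + k) := by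
  induction k generalizing n with
  | zero => simp
  | succ k ih =>
    rw [pow_succ', Module.End.mul_apply, LinearMap.funLeft_apply, ih]
    congr 1
    omega

theorem aeval_seqShift_apply {S A : Type*} [CommRing S] [CommRing A] [Algebra S A]
    (χ : S[X]) (a : ℕ → A) (n : ℕ) :
    aeval (seqShift S A) χ a n =
      ∑ i ∈ Finset.range (χ.natDegree + 1), χ.coeff i • a (n + i) := by
  rw [aeval_eq_sum_range, LinearMap.sum_apply, Finset.sum_apply]
  refine Finset.sum_congr rfl fun i _ => ?_
  rw [LinearMap.smul_apply, Pi.smul_apply, seqShift_pow_apply]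

theorem aeval_seqShift_map {S S' : Type*} [CommRing S] [CommRing S'] (φ : S →+* S')
    (χ : S[X]) (a : ℕ → S) (n : ℕ) :
    aeval (seqShift S' S') (χ.map φ) (fun i => φ (a i)) n = φ (aeval (seqShift S S) χ a n) := by
  have h : ∀ N, χ.natDegree ≤ N → aeval (seqShift S' S') (χ.map φ) (fun i => φ (a i)) n =
      ∑ i ∈ Finset.range (N + 1), φ (χ.coeff i) * φ (a (n + i)) := by
    intro N hN
    rw [aeval_eq_sum_range' (n := N + 1) (by have := natDegree_map_le (f := φ) (p := χ); omega),
      LinearMap.sum_apply, Finset.sum_apply]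
    refine Finset.sum_congr rfl fun i _ => ?_
    rw [LinearMap.smul_apply, Pi.smul_apply, seqShift_pow_apply, coeff_map, smul_eq_mul]
  rw [h _ le_rfl, aeval_seqShift_apply, map_sum]
  simp

/-- If `S / q` has at most `D` elements, then `X` is a unit of order dividing `(D ^ deg χ)!` in the
finite ring `(S / q)[X] / χ`. The exponent depends only on `D` and the degree of `χ`. -/
theorem exists_X_pow_sub_one_eq {S : Type*} [CommRing S] (q : S) (D : ℕ)
    [Finite (S ⧸ Ideal.span {q})] (hD : Nat.card (S ⧸ Ideal.span {q}) ≤ D)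
    {χ : S[X]} (hχ : χ.Monic) (h0 : IsUnit (χ.coeff 0)) :
    ∃ B E : S[X], X ^ (D ^ χ.natDegree).factorial - 1 = C q * B + χ * E := by
  set I := Ideal.span {q} with hI
  set χ' := χ.map (Ideal.Quotient.mk I) with hχ'
  have hmon : χ'.Monic := hχ.map _
  rcases subsingleton_or_nontrivial (S ⧸ I) with hs | hs
  · have : I = ⊤ := Ideal.Quotient.subsingleton_iff.mp hs
    have hu : IsUnit q := Ideal.span_singleton_eq_top.mp this
    obtain ⟨v, hv⟩ := hu.exists_right_inv
    refine ⟨C v * (X ^ (D ^ χ.natDegree).factorial - 1), 0, ?_⟩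
    rw [← mul_assoc, ← C_mul, hv]
    simp
  have := Fintype.ofFinite (S ⧸ I)
  let e := (AdjoinRoot.powerBasis' hmon).basis.equivFun
  have hfin : Finite (AdjoinRoot χ') := Finite.of_equiv _ e.symm.toEquiv
  have hcard : Nat.card (AdjoinRoot χ') ≤ D ^ χ.natDegree := by
    rw [Nat.card_congr e.toEquiv, Nat.card_fun, Nat.card_fin, AdjoinRoot.powerBasis'_dim,
      hχ', hχ.natDegree_map]
    exact Nat.pow_le_pow_left hD _
  have hroot : IsUnit (AdjoinRoot.root χ') := by
    have h1 : AdjoinRoot.mk χ' (χ'.divX * X + C (χ'.coeff 0)) = 0 := by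
      rw [divX_mul_X_add, AdjoinRoot.mk_self]
    rw [map_add, map_mul, AdjoinRoot.mk_X] at h1
    have h2 : IsUnit (AdjoinRoot.mk χ' (C (χ'.coeff 0))) := by
      rw [hχ', coeff_map]
      exact ((h0.map _).map C).map _
    rw [eq_neg_of_add_eq_zero_right h1] at h2
    exact isUnit_of_mul_isUnit_right ((IsUnit.neg_iff _).mp h2)
  obtain ⟨u, hu⟩ := hroot
  have hcardu : Nat.card (AdjoinRoot χ')ˣ ∣ (D ^ χ.natDegree).factorial :=
    Nat.dvd_factorial Nat.card_pos
      ((Nat.card_le_card_of_injective _ Units.val_injective).trans hcard)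
  have hpow : u ^ (D ^ χ.natDegree).factorial = 1 := by
    obtain ⟨c, hc⟩ := hcardu
    rw [hc, pow_mul, pow_card_eq_one', one_pow]
  have hmk : AdjoinRoot.mk χ' (X ^ (D ^ χ.natDegree).factorial - 1) = 0 := by
    rw [map_sub, map_pow, AdjoinRoot.mk_X, ← hu, ← Units.val_pow_eq_pow_val, hpow]
    simp
  rw [AdjoinRoot.mk_eq_zero] at hmk
  obtain ⟨E', hE'⟩ := hmk
  obtain ⟨E, rfl⟩ := Polynomial.map_surjective _ Ideal.Quotient.mk_surjective E'
  have hzero : (X ^ (D ^ χ.natDegree).factorial - 1 - χ * E).map (Ideal.Quotient.mk I) = 0 := by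
    rw [Polynomial.map_sub, Polynomial.map_mul, ← hE']
    simp
  have hdvd : C q ∣ X ^ (D ^ χ.natDegree).factorial - 1 - χ * E := by
    rw [C_dvd_iff_dvd_coeff]
    intro i
    rw [← Ideal.mem_span_singleton, ← hI, ← Ideal.Quotient.eq_zero_iff_mem, ← coeff_map, hzero,
      coeff_zero]
  obtain ⟨B, hB⟩ := hdvd
  exact ⟨B, E, by rw [← hB]; ring⟩

/-- Along a progression of step `N`, the shift acts as `X ^ N = 1 + q B` modulo `χ`, and the binomial
theorem expands `a (r + N n)` in powers of `q`. -/
theorem shift_expansion {S : Type*} [CommRing S] (q : S) {χ B E : S[X]} {N : ℕ}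
    (hN : X ^ N - 1 = C q * B + χ * E) (a : ℕ → S) (ha : aeval (seqShift S S) χ a = 0)
    (r n : ℕ) :
    a (r + N * n) = ∑ k ∈ Finset.range (n + 1),
      (n.choose k : S) * q ^ k * (aeval (seqShift S S) (B ^ k) a r) := by
  have h1 : (X : S[X]) ^ (N * n) - (C q * B + 1) ^ n = (X ^ N) ^ n - (C q * B + 1) ^ n := by
    rw [pow_mul]
  have h2 : χ ∣ (X : S[X]) ^ (N * n) - (C q * B + 1) ^ n := by
    rw [h1]
    refine dvd_trans ⟨E, ?_⟩ (sub_dvd_pow_sub_pow _ _ n)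
    linear_combination hN
  obtain ⟨F, hF⟩ := h2
  have h3 : aeval (seqShift S S) ((X : S[X]) ^ (N * n)) a =
      aeval (seqShift S S) ((C q * B + 1) ^ n) a := by
    rw [← sub_eq_zero, ← LinearMap.sub_apply, ← map_sub, hF, mul_comm, map_mul,
      Module.End.mul_apply, ha, map_zero]
  have h4 := congrFun h3 r
  rw [map_pow, aeval_X, seqShift_pow_apply] at h4
  rw [h4, add_pow, map_sum, LinearMap.sum_apply, Finset.sum_apply]
  refine Finset.sum_congr rfl fun k _ => ?_
  have h5 : (C q * B) ^ k * 1 ^ (n - k) * ((n.choose k : ℕ) : S[X]) =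
      C ((n.choose k : S) * q ^ k) * B ^ k := by
    simp only [mul_pow, one_pow, C_mul, C_pow, map_natCast]
    ring
  rw [h5, ← smul_eq_C_mul, map_smul, LinearMap.smul_apply, Pi.smul_apply, smul_eq_mul]

/-! ### Specialization to rings finite over a localization of ℤ -/

/-- Let `R` be finite over a local ring `B`, and let `ψ : B → Z` be a surjection onto a Noetherian
domain in which every element is an integer modulo `p ^ 2`. A prime `P` of `R` above `ker ψ` avoids
every `r` dividing some `b` with `ψ b ≠ 0`; the quotient `R / P` is finite over `Z`, so it is
`p`-adically separated by Krull's intersection theorem and has at most `(p ^ 2) ^ D` elements modulo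
`p ^ 2`, where `D` is the number of generators of `R`. -/
theorem exists_prime_quotient {B R Z : Type*} [CommRing B] [IsLocalRing B] [CommRing R] [IsDomain R]
    [Algebra B R] [FaithfulSMul B R] [CommRing Z] [IsDomain Z] [CharZero Z] [IsNoetherianRing Z]
    {p : ℕ} (hp0 : p ≠ 0) (hp : (p : B) ∈ IsLocalRing.maximalIdeal B)
    (hZ : ∀ z : Z, ∃ k : ℤ, (p : Z) ^ 2 ∣ z - k) (ψ : B →+* Z) (hψ : Function.Surjective ψ)
    {D : ℕ} (e : Fin D → R) (he : Submodule.span B (Set.range e) = ⊤)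
    (r : R) (b : B) (hrb : r ∣ algebraMap B R b) (hb : ψ b ≠ 0) :
    ∃ P : Ideal R, P.IsPrime ∧ r ∉ P ∧ CharZero (R ⧸ P) ∧
      (∀ x : R ⧸ P, (∀ k, (p : R ⧸ P) ^ k ∣ x) → x = 0) ∧
      Finite ((R ⧸ P) ⧸ Ideal.span {(p : R ⧸ P) ^ 2}) ∧
      Nat.card ((R ⧸ P) ⧸ Ideal.span {(p : R ⧸ P) ^ 2}) ≤ (p ^ 2) ^ D := by
  classical
  have hfin : Module.Finite B R := ⟨⟨Finset.univ.image e, by simpa using he⟩⟩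
  have hBR : Algebra.IsIntegral B R := inferInstance
  set 𝔭 := RingHom.ker ψ with h𝔭
  have hprime : 𝔭.IsPrime := RingHom.ker_isPrime ψ
  obtain ⟨P, hP, hPc⟩ := Ideal.exists_ideal_over_prime_of_isIntegral_of_isDomain (S := R) 𝔭
    (by rw [(RingHom.injective_iff_ker_eq_bot _).mp (FaithfulSMul.algebraMap_injective B R)]
        exact bot_le)
  have hmem : ∀ x : B, algebraMap B R x ∈ P ↔ ψ x = 0 := by
    intro x
    rw [← Ideal.mem_comap, hPc, h𝔭, RingHom.mem_ker]
  have hlies : P.LiesOver 𝔭 := ⟨hPc.symm⟩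
  have hnoeth : IsNoetherianRing (B ⧸ 𝔭) :=
    isNoetherianRing_of_ringEquiv Z (RingHom.quotientKerEquivOfSurjective hψ).symm
  have hfin1 : Module.Finite B (R ⧸ P) :=
    Module.Finite.of_surjective (Ideal.Quotient.mkₐ B P).toLinearMap
      Ideal.Quotient.mk_surjective
  have hfin2 : Module.Finite (B ⧸ 𝔭) (R ⧸ P) := Module.Finite.of_restrictScalars_finite B _ _
  have hnoethS : IsNoetherianRing (R ⧸ P) := IsNoetherianRing.of_finite (B ⧸ 𝔭) (R ⧸ P)
  -- `p` lies in a maximal ideal of `R` above `P`, since those contract to the maximal ideal of `B`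
  have hpS : Ideal.span {(p : R ⧸ P)} ≠ ⊤ := by
    intro htop
    obtain ⟨M, hM, hPM⟩ := Ideal.exists_le_maximal P hP.ne_top
    have hMc : M.comap (algebraMap B R) = IsLocalRing.maximalIdeal B :=
      IsLocalRing.eq_maximalIdeal (Ideal.isMaximal_comap_of_isIntegral_of_isMaximal M)
    have hpM : (p : R) ∈ M := by
      have : (p : B) ∈ M.comap (algebraMap B R) := hMc ▸ hp
      simpa using this
    obtain ⟨v, hv⟩ := (Ideal.span_singleton_eq_top.mp htop).exists_right_inv
    obtain ⟨v, rfl⟩ := Ideal.Quotient.mk_surjective v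
    have h1 : (p : R) * v - 1 ∈ P := by
      rw [← Ideal.Quotient.eq_zero_iff_mem]
      simpa [sub_eq_zero] using hv
    refine hM.ne_top ((Ideal.eq_top_iff_one M).mpr ?_)
    have := M.sub_mem (M.mul_mem_right v hpM) (hPM h1)
    simpa using this
  let π : R →+* (R ⧸ P) ⧸ Ideal.span {(p : R ⧸ P) ^ 2} :=
    (Ideal.Quotient.mk _).comp (Ideal.Quotient.mk P)
  have hπ : Function.Surjective π :=
    Ideal.Quotient.mk_surjective.comp Ideal.Quotient.mk_surjective
  have hπp : π ((p : R) ^ 2) = 0 := by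
    have h := Ideal.Quotient.eq_zero_iff_mem.mpr (Ideal.mem_span_singleton_self ((p : R ⧸ P) ^ 2))
    rw [map_pow, map_natCast] at h ⊢
    exact h
  have hπP : ∀ x ∈ P, π x = 0 := by
    intro x hx
    simp only [π, RingHom.comp_apply, Ideal.Quotient.eq_zero_iff_mem.mpr hx, map_zero]
  have hres : ∀ c : B, ∃ k : Fin (p ^ 2), π (algebraMap B R c) = ((k : ℕ) : _) := by
    intro c
    obtain ⟨k, w, hw⟩ := hZ (ψ c)
    obtain ⟨w, rfl⟩ := hψ w
    have hpos : (0 : ℤ) < (p : ℤ) ^ 2 := by positivity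
    have h1 : algebraMap B R (c - k - (p : B) ^ 2 * w) ∈ P := by
      rw [hmem]
      simp [hw]
    have h2 := hπP _ h1
    have h3 : π (algebraMap B R c) = (k : _) := by
      have h4 : algebraMap B R (c - k - (p : B) ^ 2 * w) =
          algebraMap B R c - (k : R) - (p : R) ^ 2 * algebraMap B R w := by simp
      rw [h4, map_sub, map_sub, map_mul, hπp, zero_mul, sub_zero, map_intCast, sub_eq_zero] at h2
      exact h2
    have hlt := Int.emod_lt_of_pos k hpos
    have hnn := Int.emod_nonneg k hpos.ne'
    refine ⟨⟨(k % (p : ℤ) ^ 2).toNat, by zify; rw [Int.toNat_of_nonneg hnn]; exact hlt⟩, ?_⟩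
    have h4 : (((k % (p : ℤ) ^ 2).toNat : ℕ) : ℤ) = k % (p : ℤ) ^ 2 := Int.toNat_of_nonneg hnn
    have h6 := congrArg (Int.cast : ℤ → (R ⧸ P) ⧸ Ideal.span {(p : R ⧸ P) ^ 2}) h4
    rw [Int.cast_natCast] at h6
    refine h3.trans (Eq.trans ?_ h6.symm)
    conv_lhs => rw [← Int.emod_add_mul_ediv k ((p : ℤ) ^ 2)]
    have h5 : (((p : ℤ) ^ 2 : ℤ) : (R ⧸ P) ⧸ Ideal.span {(p : R ⧸ P) ^ 2}) = 0 := by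
      rw [← hπp]
      simp
    rw [Int.cast_add, Int.cast_mul, h5, zero_mul, add_zero]
  have hsurj : Function.Surjective (fun k : Fin D → Fin (p ^ 2) =>
      ∑ i, (((k i : ℕ) : (R ⧸ P) ⧸ Ideal.span {(p : R ⧸ P) ^ 2})) * π (e i)) := by
    intro x
    obtain ⟨y, rfl⟩ := hπ x
    have hy : y ∈ Submodule.span B (Set.range e) := he ▸ Submodule.mem_top
    obtain ⟨c, rfl⟩ := (Submodule.mem_span_range_iff_exists_fun B).mp hy
    choose k hk using hres
    refine ⟨fun i => k (c i), ?_⟩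
    simp only [map_sum, Algebra.smul_def, map_mul, hk]
  refine ⟨P, hP, ?_, ?_, ?_, ?_, ?_⟩
  · intro hr
    exact hb ((hmem b).mp (P.mem_of_dvd hrb hr))
  · refine charZero_of_inj_zero fun n hn => ?_
    have : algebraMap B R (n : B) ∈ P := by
      rw [map_natCast, ← Ideal.Quotient.eq_zero_iff_mem, map_natCast]
      exact hn
    rw [hmem, map_natCast] at this
    exact_mod_cast this
  · intro x hx
    have h := Ideal.iInf_pow_eq_bot_of_isDomain _ hpS
    rw [← Ideal.mem_bot, ← h, Ideal.mem_iInf]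
    intro k
    rw [Ideal.span_singleton_pow, Ideal.mem_span_singleton]
    exact hx k
  · exact Finite.of_surjective _ hsurj
  · refine (Nat.card_le_card_of_surjective _ hsurj).trans ?_
    simp

theorem exists_int_sub_dvd_localization {p : ℕ} (hp : p.Prime) [(Ideal.span {(p : ℤ)}).IsPrime]
    (z : Localization.AtPrime (Ideal.span {(p : ℤ)})) :
    ∃ k : ℤ, (p : Localization.AtPrime (Ideal.span {(p : ℤ)})) ^ 2 ∣ z - k := by
  obtain ⟨⟨a, s⟩, rfl⟩ := IsLocalization.mk'_surjective (Ideal.span {(p : ℤ)}).primeCompl z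
  have hs : ¬ (p : ℤ) ∣ s := fun h => s.2 (Ideal.mem_span_singleton.mpr h)
  have hcop : IsCoprime ((p : ℤ) ^ 2) (s : ℤ) :=
    ((Nat.prime_iff_prime_int.mp hp).coprime_iff_not_dvd.mpr hs).pow_left
  obtain ⟨u, v, huv⟩ := hcop
  refine ⟨a * v, IsLocalization.mk' _ (a * u) s, ?_⟩
  rw [eq_comm, ← sub_eq_zero]
  have hunit := IsLocalization.map_units (Localization.AtPrime (Ideal.span {(p : ℤ)})) s
  apply hunit.mul_left_cancel
  have e1 := IsLocalization.mk'_spec' (Localization.AtPrime (Ideal.span {(p : ℤ)})) a s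
  have e2 := IsLocalization.mk'_spec' (Localization.AtPrime (Ideal.span {(p : ℤ)})) (a * u) s
  have e3 := congrArg (algebraMap ℤ (Localization.AtPrime (Ideal.span {(p : ℤ)}))) huv
  simp only [map_add, map_mul, map_pow, map_natCast, map_one, eq_intCast] at e1 e2 e3 ⊢
  push_cast
  linear_combination (p : Localization.AtPrime (Ideal.span {(p : ℤ)})) ^ 2 * e2 - e1
    + (a : Localization.AtPrime (Ideal.span {(p : ℤ)})) * e3

/-- Any finite set `T` in a field of characteristic zero lies in a subring `R` with enough
specializations of characteristic zero that are `p`-adically separated and uniformly finite modulo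
`p ^ 2`. The prime `p` and the bound `D` do not depend on the element `r` that has to survive the
specialization.

Here `R` is generated by `T` over the localization `B` of a polynomial ring over `ℤ` in a
transcendence basis at the kernel of an evaluation modulo `p`, chosen so that `T` is integral over
`B`. The specializations extend the evaluations of `B` at the integer points `c` congruent modulo
`p` to a fixed point `c₀`. -/
theorem exists_specializations {L : Type*} [Field L] [CharZero L] (T : Finset L) :
    ∃ (p D : ℕ) (R : Subring L), p.Prime ∧ (T : Set L) ⊆ R ∧ ∀ r : R, r ≠ 0 →
      ∃ P : Ideal R, P.IsPrime ∧ r ∉ P ∧ CharZero (R ⧸ P) ∧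
        (∀ x : R ⧸ P, (∀ k, (p : R ⧸ P) ^ k ∣ x) → x = 0) ∧
        Finite ((R ⧸ P) ⧸ Ideal.span {(p : R ⧸ P) ^ 2}) ∧
        Nat.card ((R ⧸ P) ⧸ Ideal.span {(p : R ⧸ P) ^ 2}) ≤ D := by
  obtain ⟨ι, x, hx⟩ := exists_isTranscendenceBasis' ℤ L
  let _ : Algebra (MvPolynomial ι ℤ) L := (MvPolynomial.aeval x).toRingHom.toAlgebra
  have hinj : Function.Injective (algebraMap (MvPolynomial ι ℤ) L) := hx.1
  have halg : Algebra.IsAlgebraic (MvPolynomial ι ℤ) L := by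
    have := hx.isAlgebraic
    refine Algebra.IsAlgebraic.of_ringHom_of_comp_eq
      (hx.1.aevalEquiv : MvPolynomial ι ℤ →+* Algebra.adjoin ℤ (Set.range x)) (RingHom.id L)
      hx.1.aevalEquiv.surjective Function.injective_id ?_
    ext <;> simp [RingHom.algebraMap_toAlgebra]
  -- `f` is a common denominator of `T`; inverting it makes `T` integral, so `p` and `c₀` are
  -- chosen with `f (c₀)` prime to `p`
  obtain ⟨f, hf0, hf⟩ := Algebra.IsAlgebraic.exists_integral_multiples (MvPolynomial ι ℤ) T
  obtain ⟨c₀, hc₀⟩ : ∃ c₀ : ι → ℤ, MvPolynomial.eval c₀ f ≠ 0 := by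
    by_contra! h
    exact hf0 (MvPolynomial.funext fun c => by simpa using h c)
  obtain ⟨p, hpgt, hp⟩ := Nat.exists_infinite_primes ((MvPolynomial.eval c₀ f).natAbs + 1)
  have := Fact.mk hp
  let ε : MvPolynomial ι ℤ →+* ZMod p := (Int.castRingHom (ZMod p)).comp (MvPolynomial.eval c₀)
  have hεf : ε f ≠ 0 := by
    intro h
    have h1 : (p : ℤ) ∣ MvPolynomial.eval c₀ f := by
      rw [← ZMod.intCast_zmod_eq_zero_iff_dvd]; exact h
    have := Nat.le_of_dvd (Int.natAbs_pos.mpr hc₀) (Int.natCast_dvd.mp h1)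
    omega
  let 𝔮 : Ideal (MvPolynomial ι ℤ) := RingHom.ker ε
  have h𝔮 : 𝔮.IsPrime := RingHom.ker_isPrime ε
  let B := Localization.AtPrime 𝔮
  have hunits : ∀ y : 𝔮.primeCompl, IsUnit (algebraMap (MvPolynomial ι ℤ) L y) := by
    intro y
    refine isUnit_iff_ne_zero.mpr fun h => y.2 ?_
    rw [(map_eq_zero_iff _ hinj).mp h]
    exact 𝔮.zero_mem
  let _ : Algebra B L := (IsLocalization.lift (S := B) hunits).toAlgebra
  have htower : IsScalarTower (MvPolynomial ι ℤ) B L :=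
    IsScalarTower.of_algebraMap_eq fun y => (IsLocalization.lift_eq hunits y).symm
  have hBinj : Function.Injective (algebraMap B L) := by
    rw [injective_iff_map_eq_zero]
    intro y hy
    obtain ⟨⟨a, s⟩, rfl⟩ := IsLocalization.mk'_surjective 𝔮.primeCompl y
    have h1 : IsLocalization.lift (S := B) hunits (IsLocalization.mk' B a s) = 0 := hy
    rw [IsLocalization.lift_mk'_spec, mul_zero] at h1
    rw [(map_eq_zero_iff _ hinj).mp h1]
    exact IsLocalization.mk'_zero s
  have hTint : ∀ y ∈ (T : Set L), IsIntegral B y := by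
    intro y hy
    have h1 : IsIntegral B (f • y) := (hf y hy).tower_top
    obtain ⟨u, hu⟩ := IsLocalization.map_units B (⟨f, hεf⟩ : 𝔮.primeCompl)
    have h2 : y = ((u⁻¹ : Bˣ) : B) • (f • y) := by
      rw [← algebraMap_smul B f y, smul_smul]
      have : algebraMap (MvPolynomial ι ℤ) B f = u := hu.symm
      rw [this, Units.inv_mul, one_smul]
    rw [h2]
    exact h1.smul _
  let R : Subalgebra B L := Algebra.adjoin B (T : Set L)
  have hRfin : Module.Finite B R := Module.Finite.of_fg (fg_adjoin_of_finite T.finite_toSet hTint)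
  have hRfaith : FaithfulSMul B R := by
    rw [faithfulSMul_iff_algebraMap_injective]
    intro a b hab
    exact hBinj (congrArg (Subtype.val : R → L) hab)
  obtain ⟨D, e, he⟩ := Module.Finite.exists_fin (R := B) (M := R)
  have hpprime : (Ideal.span {(p : ℤ)}).IsPrime :=
    (Ideal.span_singleton_prime (by exact_mod_cast hp.ne_zero)).mpr
      (Nat.prime_iff_prime_int.mp hp)
  let Z := Localization.AtPrime (Ideal.span {(p : ℤ)})
  have hZinj : Function.Injective (algebraMap ℤ Z) :=
    IsLocalization.injective Z (Ideal.primeCompl_le_nonZeroDivisors (Ideal.span {(p : ℤ)}))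
  have hZdom : IsDomain Z :=
    IsLocalization.isDomain_of_le_nonZeroDivisors Z
      (Ideal.primeCompl_le_nonZeroDivisors (Ideal.span {(p : ℤ)}))
  have hZchar : CharZero Z := charZero_of_injective_algebraMap hZinj
  have hZnoeth : IsNoetherianRing Z :=
    IsLocalization.isNoetherianRing (Ideal.span {(p : ℤ)}).primeCompl Z inferInstance
  refine ⟨p, (p ^ 2) ^ D, R.toSubring, hp, Algebra.subset_adjoin, fun r hr => ?_⟩
  -- by integrality, `r` divides a nonzero element `b` of `B`
  obtain ⟨b, hbmem, hb0⟩ : ∃ b : B, b ∈ (Ideal.span {(r : R)}).comap (algebraMap B R) ∧ b ≠ 0 := by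
    refine Submodule.exists_mem_ne_zero_of_ne_bot ?_
    exact Ideal.comap_ne_bot_of_integral_mem (R := B) (S := R) (x := r) hr
      (Ideal.mem_span_singleton_self _) (Algebra.IsIntegral.isIntegral _)
  obtain ⟨⟨q, s⟩, rfl⟩ := IsLocalization.mk'_surjective 𝔮.primeCompl b
  have hq0 : q ≠ 0 := by
    rintro rfl
    exact hb0 (IsLocalization.mk'_zero _)
  -- a nonzero polynomial cannot vanish on the whole residue class of `c₀`, an infinite grid
  obtain ⟨c, hcc₀, hcq⟩ : ∃ c : ι → ℤ, (∀ i, (c i : ZMod p) = c₀ i) ∧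
      MvPolynomial.eval c q ≠ 0 := by
    by_contra! h
    refine hq0 (MvPolynomial.funext_set (fun i => {z : ℤ | (z : ZMod p) = c₀ i}) (fun i => ?_) ?_)
    · refine Set.infinite_of_injective_forall_mem (f := fun n : ℕ => c₀ i + p * n) ?_ ?_
      · intro m n hmn
        have : (p : ℤ) ≠ 0 := by exact_mod_cast hp.ne_zero
        have h1 : (p : ℤ) * m = p * n := add_left_cancel hmn
        exact_mod_cast mul_left_cancel₀ this h1
      · intro n
        simp
    · intro c hc
      rw [map_zero]
      exact h c fun i => hc i trivial
  have hεc : (Int.castRingHom (ZMod p)).comp (MvPolynomial.eval c) = ε := by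
    refine MvPolynomial.ringHom_ext (fun z => by simp [ε]) fun i => ?_
    simpa [ε] using hcc₀ i
  have hψunits : ∀ y : 𝔮.primeCompl,
      IsUnit (((algebraMap ℤ Z).comp (MvPolynomial.eval c)) y) := by
    intro y
    refine IsLocalization.map_units Z
      (⟨MvPolynomial.eval c y, fun h => y.2 ?_⟩ : (Ideal.span {(p : ℤ)}).primeCompl)
    rw [SetLike.mem_coe, Ideal.mem_span_singleton, ← ZMod.intCast_zmod_eq_zero_iff_dvd] at h
    change ε y = 0
    rw [← hεc]
    exact h
  let ψ : B →+* Z := IsLocalization.lift (S := B) hψunits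
  have hψsurj : Function.Surjective ψ := by
    intro z
    obtain ⟨⟨a, t⟩, rfl⟩ := IsLocalization.mk'_surjective (Ideal.span {(p : ℤ)}).primeCompl z
    have ht : (MvPolynomial.C (t : ℤ) : MvPolynomial ι ℤ) ∈ 𝔮.primeCompl := by
      intro h
      have h1 : ε (MvPolynomial.C (t : ℤ)) = 0 := h
      refine t.2 ?_
      rw [SetLike.mem_coe, Ideal.mem_span_singleton, ← ZMod.intCast_zmod_eq_zero_iff_dvd]
      simpa [ε] using h1
    refine ⟨IsLocalization.mk' B (MvPolynomial.C a) ⟨_, ht⟩, ?_⟩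
    rw [IsLocalization.lift_mk'_spec]
    simpa using (IsLocalization.mk'_spec' Z a t).symm
  have hψb : ψ (IsLocalization.mk' B q s) ≠ 0 := by
    intro h
    rw [IsLocalization.lift_mk'_spec, mul_zero] at h
    exact hcq ((map_eq_zero_iff _ hZinj).mp h)
  have hpmax : (p : B) ∈ IsLocalRing.maximalIdeal B := by
    rw [← map_natCast (algebraMap (MvPolynomial ι ℤ) B),
      IsLocalization.AtPrime.to_map_mem_maximal_iff B 𝔮]
    change ε p = 0
    simp
  exact exists_prime_quotient (B := B) (R := R) hp.ne_zero hpmax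
    (exists_int_sub_dvd_localization hp) ψ hψsurj e he r _
    (Ideal.mem_span_singleton.mp hbmem) hψb

/-! ### The Skolem–Mahler–Lech theorem -/

/-- For a recurrence with invertible constant coefficient, the zeros along each progression of a
fixed step `N` are all or finitely many. If a progression contains infinitely many zeros and a
nonzero term, a specialization keeping that term nonzero contradicts `eq_zero_of_infinite_zeros`;
`N` is available beforehand because the specializations are uniformly finite modulo `p ^ 2`. -/
theorem zeros_on_progressions {L : Type*} [Field L] [CharZero L] (b : ℕ → L) {χ : L[X]}
    (hχ : χ.Monic) (h0 : χ.coeff 0 ≠ 0) (hb : aeval (seqShift L L) χ b = 0) :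
    ∃ N, 0 < N ∧ ∀ r, (∀ n, b (r + N * n) = 0) ∨ {n | b (r + N * n) = 0}.Finite := by
  classical
  obtain ⟨p, D, R, hp, hTR, hspec⟩ := exists_specializations
    (χ.coeffs ∪ (Finset.range χ.natDegree).image b ∪ {(χ.coeff 0)⁻¹})
  have hcoeffs : (χ.coeffs : Set L) ⊆ R := fun y hy => hTR (by simp [Finset.mem_coe.mp hy])
  have hcoeff : ∀ i, χ.coeff i ∈ R := by
    intro i
    by_cases hi : χ.coeff i = 0
    · rw [hi]; exact R.zero_mem
    · exact hcoeffs (Polynomial.coeff_mem_coeffs hi)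
  have hinv : (χ.coeff 0)⁻¹ ∈ R := hTR (by simp)
  have hbR : ∀ n, b n ∈ R := by
    intro n
    induction n using Nat.strong_induction_on with
    | _ n ih =>
      by_cases hn : n < χ.natDegree
      · exact hTR (by simpa using Or.inr (Or.inr ⟨n, hn, rfl⟩))
      · have h1 := congrFun hb (n - χ.natDegree)
        rw [aeval_seqShift_apply, Finset.sum_range_succ, hχ.coeff_natDegree, one_smul,
          Nat.sub_add_cancel (not_lt.mp hn), Pi.zero_apply] at h1
        rw [eq_neg_of_add_eq_zero_right h1]
        refine R.neg_mem (R.sum_mem fun i hi => R.mul_mem (hcoeff i) (ih _ ?_))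
        have := Finset.mem_range.mp hi
        omega
  set χR : R[X] := χ.toSubring R hcoeffs with hχR
  set bR : ℕ → R := fun n => ⟨b n, hbR n⟩ with hbRdef
  have hmapχ : χR.map R.subtype = χ := Polynomial.map_toSubring _ _ _
  have hmonR : χR.Monic := (Polynomial.monic_toSubring _ _ _).mpr hχ
  have hunitR : IsUnit (χR.coeff 0) := by
    refine IsUnit.of_mul_eq_one ⟨_, hinv⟩ (Subtype.ext ?_)
    simp [hχR, mul_inv_cancel₀ h0]
  have hbR0 : aeval (seqShift R R) χR bR = 0 := by
    funext n
    apply Subtype.val_injective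
    have h1 := aeval_seqShift_map R.subtype χR bR n
    rw [hmapχ] at h1
    exact h1.symm.trans (congrFun hb n)
  refine ⟨(D ^ χR.natDegree).factorial, Nat.factorial_pos _, fun r => ?_⟩
  by_contra! hcon
  obtain ⟨⟨n₀, hn₀⟩, hinf⟩ := hcon
  obtain ⟨P, hP, hrP, hchar, hsep, hfin, hcard⟩ :=
    hspec (bR (r + (D ^ χR.natDegree).factorial * n₀)) (fun h => hn₀ (congrArg Subtype.val h))
  let φ := Ideal.Quotient.mk P
  have hmonS : (χR.map φ).Monic := hmonR.map φ
  have hdeg : (χR.map φ).natDegree = χR.natDegree := hmonR.natDegree_map φ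
  obtain ⟨B, E, hBE⟩ := exists_X_pow_sub_one_eq ((p : R ⧸ P) ^ 2) D hcard hmonS
    (by rw [coeff_map]; exact hunitR.map φ)
  rw [hdeg] at hBE
  have hbS : aeval (seqShift (R ⧸ P) (R ⧸ P)) (χR.map φ) (fun i => φ (bR i)) = 0 := by
    funext n
    rw [aeval_seqShift_map, hbR0]
    simp
  refine hrP (Ideal.Quotient.eq_zero_iff_mem.mp ?_)
  refine eq_zero_of_infinite_zeros hp hsep
    (fun n => φ (bR (r + (D ^ χR.natDegree).factorial * n)))
    (fun k => aeval (seqShift (R ⧸ P) (R ⧸ P)) (B ^ k) (fun i => φ (bR i)) r) ?_ ?_ n₀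
  · intro n
    have := shift_expansion _ hBE _ hbS r n
    simpa only [pow_mul] using this
  · refine hinf.mono fun n hn => ?_
    have : bR (r + (D ^ χR.natDegree).factorial * n) = 0 := Subtype.ext hn
    simp only [Set.mem_ofPred_eq, this, map_zero]

/-- The Skolem–Mahler–Lech theorem: the zero set of a linear recurrence over a field of
characteristic zero is eventually periodic. -/
theorem zeros_eventually_periodic {L : Type*} [Field L] [CharZero L] (b : ℕ → L) {χ : L[X]}
    (hχ : χ ≠ 0) (hb : aeval (seqShift L L) χ b = 0) :
    ∃ N M, 0 < N ∧ ∀ n, M ≤ n → (b (n + N) = 0 ↔ b n = 0) := by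
  -- writing `χ = X ^ k * q` with `q.coeff 0 ≠ 0`, the `k`-fold shift of `b` is annihilated by `q`
  obtain ⟨q, hq, hqX⟩ := exists_eq_pow_rootMultiplicity_mul_and_not_dvd χ hχ 0
  set k := χ.rootMultiplicity 0
  rw [C_0, sub_zero] at hq hqX
  have hq0 : q ≠ 0 := by rintro rfl; simp at hqX
  have hq00 : q.coeff 0 ≠ 0 := fun h => hqX (X_dvd_iff.mpr h)
  set b' := (seqShift L L ^ k) b with hb'
  have hqb : aeval (seqShift L L) (q * C q.leadingCoeff⁻¹) b' = 0 := by
    have h1 : aeval (seqShift L L) (C q.leadingCoeff⁻¹ * χ) b = 0 := by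
      rw [map_mul, Module.End.mul_apply, hb, map_zero]
    have h2 : C q.leadingCoeff⁻¹ * χ = q * C q.leadingCoeff⁻¹ * X ^ k := by
      rw [hq]; ring
    rwa [h2, map_mul, Module.End.mul_apply, map_pow, aeval_X] at h1
  obtain ⟨N, hN, hprog⟩ := zeros_on_progressions b' (monic_mul_leadingCoeff_inv hq0)
    (by rw [coeff_mul_C]; exact mul_ne_zero hq00 (inv_ne_zero (leadingCoeff_ne_zero.mpr hq0))) hqb
  have hbound : ∀ r, ∃ m, ∀ n ≥ m, (b' (r + N * (n + 1)) = 0 ↔ b' (r + N * n) = 0) := by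
    intro r
    rcases hprog r with h | h
    · exact ⟨0, fun n _ => by rw [h, h]⟩
    · obtain ⟨m, hm⟩ := h.bddAbove
      refine ⟨m + 1, fun n hn => iff_of_false (fun h1 => ?_) fun h1 => ?_⟩
      · have := hm h1
        omega
      · have := hm h1
        omega
  choose m hm using hbound
  refine ⟨N, k + N * ((Finset.range N).sup m + 1), hN, fun n hn => ?_⟩
  obtain ⟨n', rfl⟩ := Nat.exists_eq_add_of_le (show k ≤ n by omega)
  have hn' : N * ((Finset.range N).sup m + 1) ≤ n' := by omega
  have hle : m (n' % N) ≤ n' / N := by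
    have h1 : m (n' % N) ≤ (Finset.range N).sup m :=
      Finset.le_sup (Finset.mem_range.mpr (Nat.mod_lt _ hN))
    have h2 : (Finset.range N).sup m + 1 ≤ n' / N := by
      rw [Nat.le_div_iff_mul_le hN, mul_comm]; exact hn'
    omega
  have h := hm (n' % N) (n' / N) hle
  rw [mul_add, mul_one, ← add_assoc, Nat.mod_add_div] at h
  simp only [hb', seqShift_pow_apply] at h
  rw [show k + n' + N = n' + N + k by ring, show k + n' = n' + k by ring]
  exact h

/-! ### The algebra of linearly recurrent sequences -/

/-- A sequence in an `L`-algebra `A` is *linearly recurrent* over `L` if it lies in a finitely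
generated shift-stable `L`-module of sequences. By `isLinRec_of_aeval_eq_zero` and
`IsLinRec.exists_aeval_eq_zero`, this means that it satisfies a nonzero recurrence with coefficients
in `L`; the present form makes closure under sums and products immediate. -/
def IsLinRec (L : Type*) {A : Type*} [Field L] [CommRing A] [Algebra L A] (s : ℕ → A) : Prop :=
  ∃ V : Submodule L (ℕ → A), V.FG ∧ s ∈ V ∧ V ≤ V.comap (seqShift L A)

section IsLinRec

variable {L A : Type*} [Field L] [CommRing A] [Algebra L A]

theorem IsLinRec.add {s t : ℕ → A} (hs : IsLinRec L s) (ht : IsLinRec L t) :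
    IsLinRec L (s + t) := by
  obtain ⟨V, hV, hsV, hVT⟩ := hs
  obtain ⟨W, hW, htW, hWT⟩ := ht
  refine ⟨V ⊔ W, hV.sup hW, Submodule.add_mem_sup hsV htW, sup_le ?_ ?_⟩
  · exact hVT.trans (Submodule.comap_mono le_sup_left)
  · exact hWT.trans (Submodule.comap_mono le_sup_right)

theorem IsLinRec.mul {s t : ℕ → A} (hs : IsLinRec L s) (ht : IsLinRec L t) :
    IsLinRec L (s * t) := by
  obtain ⟨V, hV, hsV, hVT⟩ := hs
  obtain ⟨W, hW, htW, hWT⟩ := ht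
  refine ⟨V * W, hV.mul hW, Submodule.mul_mem_mul hsV htW, Submodule.mul_le.mpr ?_⟩
  intro v hv w hw
  exact Submodule.mul_mem_mul (hVT hv) (hWT hw)

theorem IsLinRec.const (c : A) : IsLinRec L (fun _ : ℕ => c) := by
  refine ⟨Submodule.span L {fun _ => c}, Submodule.fg_span_singleton _,
    Submodule.mem_span_singleton_self _, ?_⟩
  rw [Submodule.span_le, Set.singleton_subset_iff]
  exact Submodule.mem_span_singleton_self _

theorem IsLinRec.sub {s t : ℕ → A} (hs : IsLinRec L s) (ht : IsLinRec L t) :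
    IsLinRec L (s - t) := by
  have h : s - t = s + (fun _ => (-1 : A)) * t := by
    ext n
    simp [sub_eq_add_neg]
  rw [h]
  exact hs.add ((IsLinRec.const _).mul ht)

theorem IsLinRec.prod {ι : Type*} (u : Finset ι) {s : ι → ℕ → A}
    (hs : ∀ i ∈ u, IsLinRec L (s i)) : IsLinRec L (∏ i ∈ u, s i) :=
  Finset.prod_induction s (IsLinRec L) (fun _ _ => IsLinRec.mul) (IsLinRec.const 1) hs

theorem isLinRec_of_aeval_eq_zero {s : ℕ → A} {χ : L[X]} (hχ : χ ≠ 0)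
    (h : aeval (seqShift L A) χ s = 0) : IsLinRec L s := by
  let ev : L[X] →ₗ[L] (ℕ → A) :=
    (LinearMap.applyₗ s).comp (aeval (seqShift L A)).toLinearMap
  have hev : ∀ q, ev q = aeval (seqShift L A) q s := fun _ => rfl
  have hmem : ∀ q, ev q ∈ (degreeLT L χ.natDegree).map ev := by
    intro q
    refine ⟨q % χ, ?_, ?_⟩
    · rw [SetLike.mem_coe, mem_degreeLT, ← degree_eq_natDegree hχ]
      exact EuclideanDomain.mod_lt q hχ
    · conv_rhs => rw [← EuclideanDomain.mod_add_div q χ]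
      rw [map_add, hev (χ * _), mul_comm, map_mul, Module.End.mul_apply, h, map_zero, add_zero]
  refine ⟨(degreeLT L χ.natDegree).map ev, ?_, ?_, ?_⟩
  · refine Submodule.FG.map _ ?_
    classical
    rw [degreeLT_eq_span_X_pow]
    exact ⟨_, rfl⟩
  · simpa [hev] using hmem 1
  · rintro _ ⟨q, _, rfl⟩
    have : seqShift L A (ev q) = ev (X * q) := by
      rw [hev, hev, map_mul, aeval_X, Module.End.mul_apply]
    rw [Submodule.mem_comap, this]
    exact hmem _

/-- Cayley–Hamilton for the shift on the finite-dimensional space containing `s`. -/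
theorem IsLinRec.exists_aeval_eq_zero {s : ℕ → A} (hs : IsLinRec L s) :
    ∃ χ : L[X], χ ≠ 0 ∧ aeval (seqShift L A) χ s = 0 := by
  obtain ⟨V, hV, hsV, hVT⟩ := hs
  have : Module.Finite L V := Module.Finite.iff_fg.mpr hV
  let T : Module.End L V := (seqShift L A).restrict hVT
  have hT : ∀ (q : L[X]) (v : V), (aeval T q v : ℕ → A) = aeval (seqShift L A) q v := by
    intro q
    induction q using Polynomial.induction_on' with
    | add p q hp hq => intro v; simp [hp, hq]
    | monomial n c =>
      intro v
      have hpow : ((T ^ n) v : ℕ → A) = (seqShift L A ^ n) v := by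
        induction n with
        | zero => simp
        | succ n ih =>
          rw [pow_succ', pow_succ', Module.End.mul_apply, Module.End.mul_apply, ← ih]
          rfl
      rw [aeval_monomial, aeval_monomial, Module.End.mul_apply, Module.End.mul_apply, ← hpow]
      simp
  refine ⟨T.charpoly, (LinearMap.charpoly_monic T).ne_zero, ?_⟩
  rw [← hT _ ⟨s, hsV⟩, LinearMap.aeval_self_charpoly]
  rfl

theorem isLinRec_of_eventually_periodic {s : ℕ → A} {N M : ℕ} (hN : 0 < N)
    (h : ∀ n, M ≤ n → s (n + N) = s n) : IsLinRec L s := by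
  refine isLinRec_of_aeval_eq_zero (χ := (X ^ N - 1) * X ^ M)
    (mul_ne_zero (X_pow_sub_C_ne_zero hN 1) (pow_ne_zero _ X_ne_zero)) ?_
  ext n
  have h1 : (X ^ N - 1) * X ^ M = (X ^ (M + N) - X ^ M : L[X]) := by ring
  rw [h1, map_sub, map_pow, map_pow, aeval_X, LinearMap.sub_apply, Pi.sub_apply,
    seqShift_pow_apply, seqShift_pow_apply, ← add_assoc, h _ (by omega), sub_self, Pi.zero_apply]

theorem IsLinRec.map_algebraMap {s : ℕ → L} (hs : IsLinRec L s) :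
    IsLinRec L (fun n => algebraMap L A (s n)) := by
  obtain ⟨χ, hχ, h⟩ := hs.exists_aeval_eq_zero
  refine isLinRec_of_aeval_eq_zero hχ ?_
  ext n
  have hn := congrArg (algebraMap L A) (congrFun h n)
  rw [aeval_seqShift_apply] at hn ⊢
  simpa [Algebra.smul_def] using hn

theorem IsLinRec.ringHom {s : ℕ → L} (hs : IsLinRec L s) (φ : L →+* L) :
    IsLinRec L (fun n => φ (s n)) := by
  obtain ⟨χ, hχ, h⟩ := hs.exists_aeval_eq_zero
  refine isLinRec_of_aeval_eq_zero (χ := χ.map φ)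
    ((Polynomial.map_ne_zero_iff φ.injective).mpr hχ) ?_
  ext n
  rw [aeval_seqShift_map, h]
  simp

/-- The indicator sequence of the zeros of a linearly recurrent sequence is linearly recurrent, by
the Skolem–Mahler–Lech theorem. -/
theorem IsLinRec.indicator [CharZero L] [DecidableEq L] {s : ℕ → L} (hs : IsLinRec L s) :
    IsLinRec L (fun n => if s n = 0 then (1 : A) else 0) := by
  obtain ⟨χ, hχ, h⟩ := hs.exists_aeval_eq_zero
  obtain ⟨N, M, hN, hper⟩ := zeros_eventually_periodic s hχ h
  exact isLinRec_of_eventually_periodic (M := M) hN fun n hn => by simp only [hper n hn]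

/-! ### Generating functions -/

/-- The coefficients of `g(x) ∑ s n x^n` in degree at least `d` are obtained by applying to `s` the
recurrence whose characteristic polynomial is `g` with its coefficients reversed. -/
theorem coeff_mul_mk_eq_aeval_reflect (g : L[X]) {d : ℕ} (hd : g.natDegree ≤ d) (s : ℕ → A)
    (n : ℕ) : PowerSeries.coeff (n + d) (((g.map (algebraMap L A) : A[X]) : PowerSeries A) *
      PowerSeries.mk s) = aeval (seqShift L A) (reflect d g) s n := by
  have hdeg : (reflect d g).natDegree < d + 1 := by
    rw [Nat.lt_succ_iff, natDegree_le_iff_coeff_eq_zero]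
    intro i hi
    rw [coeff_reflect, revAt_eq_self_of_lt hi]
    exact coeff_eq_zero_of_natDegree_lt (by omega)
  have hsub : Finset.range (d + 1) ⊆ Finset.range (n + d + 1) := Finset.range_mono (by omega)
  rw [aeval_eq_sum_range' hdeg, LinearMap.sum_apply, Finset.sum_apply, PowerSeries.coeff_mul,
    Finset.Nat.sum_antidiagonal_eq_sum_range_succ_mk, ← Finset.sum_subset hsub,
    ← Finset.sum_range_reflect]
  · refine Finset.sum_congr rfl fun i hi => ?_
    have hi' : i ≤ d := by simpa [Nat.lt_succ_iff] using hi
    rw [LinearMap.smul_apply, Pi.smul_apply, seqShift_pow_apply, coeff_reflect, revAt_le hi',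
      Polynomial.coeff_coe, coeff_map, PowerSeries.coeff_mk, Algebra.smul_def]
    congr 3
    omega
  · intro i _ hi
    have hi' : d < i := by simpa using hi
    rw [Polynomial.coeff_coe, coeff_map, coeff_eq_zero_of_natDegree_lt (by omega), map_zero,
      zero_mul]

theorem IsRationalSeq.isLinRec {a : ℕ → L} (ha : IsRationalSeq a) : IsLinRec L a := by
  obtain ⟨f, g, hg, hfg⟩ := ha
  refine isLinRec_of_aeval_eq_zero (χ := X ^ (f.natDegree + 1) * reflect g.natDegree g)
    (mul_ne_zero (pow_ne_zero _ X_ne_zero) (by simpa using hg)) ?_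
  ext n
  rw [map_mul, map_pow, aeval_X, Module.End.mul_apply, seqShift_pow_apply,
    ← coeff_mul_mk_eq_aeval_reflect g le_rfl, Algebra.algebraMap_self, Polynomial.map_id, hfg,
    Polynomial.coeff_coe, coeff_eq_zero_of_natDegree_lt (by omega), Pi.zero_apply]

theorem IsLinRec.exists_mul_mk_eq {s : ℕ → A} (hs : IsLinRec L s) :
    ∃ (F : A[X]) (G : L[X]), G ≠ 0 ∧
      ((G.map (algebraMap L A) : A[X]) : PowerSeries A) * PowerSeries.mk s =
        (F : PowerSeries A) := by
  obtain ⟨χ, hχ, h⟩ := hs.exists_aeval_eq_zero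
  set d := χ.natDegree with hd
  have hdeg : (reflect d χ).natDegree ≤ d := by
    rw [natDegree_le_iff_coeff_eq_zero]
    intro i hi
    rw [coeff_reflect, revAt_eq_self_of_lt hi]
    exact coeff_eq_zero_of_natDegree_lt hi
  refine ⟨PowerSeries.trunc d ((((reflect d χ).map (algebraMap L A) : A[X]) :
    PowerSeries A) * PowerSeries.mk s), reflect d χ, by simpa using hχ, ?_⟩
  ext n
  rw [Polynomial.coeff_coe, PowerSeries.coeff_trunc]
  split_ifs with hn
  · rfl
  · obtain ⟨m, rfl⟩ := Nat.exists_eq_add_of_le' (not_lt.mp hn)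
    have hrr : reflect d (reflect d χ) = χ := by
      ext i
      rw [coeff_reflect, coeff_reflect, revAt_invol]
    rw [coeff_mul_mk_eq_aeval_reflect _ hdeg, hrr, h, Pi.zero_apply]

end IsLinRec

/-! ### Products over distinct conjugates -/

section Conjugates

variable {K L : Type*} [Field K] [Field L] [Algebra K L]

/-- The product runs over the *set* of conjugates, without multiplicity; its size varies with `n`. -/
theorem isLinRec_prod_conjugates [CharZero L] [DecidableEq L] {a : ℕ → L} (ha : IsLinRec L a)
    (s : Finset (L ≃ₐ[K] L)) :
    IsLinRec L (fun n => ∏ r ∈ s.image (fun σ => σ (a n)), (X - C r)) := by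
  classical
  have hconj : ∀ σ : L ≃ₐ[K] L, IsLinRec L (fun n => σ (a n)) := fun σ =>
    ha.ringHom (σ : L →+* L)
  induction s using Finset.induction_on with
  | empty => simpa using IsLinRec.const (L := L) (1 : L[X])
  | insert σ s hσ ih =>
    -- `e n` is `1` if `σ (a n)` differs from all conjugates by elements of `s`, and `0` otherwise
    let e : ℕ → L[X] := ∏ τ ∈ s, ((fun _ => 1) -
      fun n => if σ (a n) - τ (a n) = 0 then (1 : L[X]) else 0)
    have he : IsLinRec L e := IsLinRec.prod s fun τ _ =>
      (IsLinRec.const 1).sub ((hconj σ).sub (hconj τ)).indicator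
    have hen : ∀ n, e n = if σ (a n) ∈ s.image (fun τ => τ (a n)) then 0 else 1 := by
      intro n
      simp only [e, Finset.prod_apply, Pi.sub_apply, sub_eq_zero]
      split_ifs with h
      · obtain ⟨τ, hτ, hτa⟩ := Finset.mem_image.mp h
        exact Finset.prod_eq_zero hτ (by simp [hτa])
      · refine Finset.prod_eq_one fun τ hτ => ?_
        rw [if_neg, sub_zero]
        exact fun hστ => h (Finset.mem_image.mpr ⟨τ, hτ, hστ.symm⟩)
    have hlin : IsLinRec L (fun n => X - C (σ (a n))) :=
      (IsLinRec.const X).sub (hconj σ).map_algebraMap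
    convert ih.mul ((IsLinRec.const 1).add (he.mul (hlin.sub (IsLinRec.const 1)))) using 1
    ext1 n
    simp only [Pi.mul_apply, Pi.add_apply, Pi.sub_apply, hen, Finset.image_insert]
    split_ifs with h
    · rw [Finset.insert_eq_of_mem h]
      ring
    · rw [Finset.prod_insert h]
      ring

theorem minpoly_map_eq_prod_conjugates [FiniteDimensional K L] [IsGalois K L] [DecidableEq L]
    (x : L) : (minpoly K x).map (algebraMap K L) =
      ∏ r ∈ (Finset.univ : Finset (L ≃ₐ[K] L)).image (fun σ => σ x), (X - C r) := by
  have hsplit : ((minpoly K x).map (algebraMap K L)).Splits := Normal.splits inferInstance x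
  have hmonic := (minpoly.monic (IsIntegral.of_finite K x)).map (algebraMap K L)
  have hnodup : ((minpoly K x).map (algebraMap K L)).roots.Nodup :=
    nodup_roots (Polynomial.Separable.map (IsGalois.separable K x))
  rw [hsplit.eq_prod_roots_of_monic hmonic, Finset.prod_eq_multiset_prod]
  congr 2
  have : ((minpoly K x).map (algebraMap K L)).roots =
    (⟨_, hnodup⟩ : Finset L).val := rfl
  rw [this]
  congr 1
  ext y
  rw [Finset.mem_mk, mem_roots hmonic.ne_zero, IsRoot, eval_map_algebraMap, Finset.mem_image]
  have hiff : aeval y (minpoly K x) = 0 ↔ minpoly K y = minpoly K x :=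
    ⟨fun h => (minpoly.eq_of_irreducible_of_monic
      (minpoly.irreducible (IsIntegral.of_finite K x)) h
      (minpoly.monic (IsIntegral.of_finite K x))).symm, fun h => h ▸ minpoly.aeval K y⟩
  rw [hiff, Normal.minpoly_eq_iff_mem_orbit L, MulAction.mem_orbit_iff]
  simp

end Conjugates

/-- For a rational sequence `aₙ` in a finite Galois extension `L` of a
characteristic-zero field `K`, the sequence of minimal polynomials `Pₙ(T)`
of `aₙ` over `K` (viewed in `L[T]`) is a rational sequence: there are
`F ∈ (L[T])[x]` and `G ∈ L[x]`, `G ≠ 0`, with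
`G(x) * ∑ Pₙ(T) xⁿ = F(x)` as power series over `L[T]`. -/
theorem minpoly_seq_rational {K L : Type*} [Field K] [Field L]
    [Algebra K L] [CharZero K] [FiniteDimensional K L] [IsGalois K L]
    (a : ℕ → L) (ha : IsRationalSeq a) :
    ∃ F : Polynomial (Polynomial L), ∃ G : Polynomial L, G ≠ 0 ∧
      ((G.map (Polynomial.C : L →+* Polynomial L) : Polynomial (Polynomial L)) :
          PowerSeries (Polynomial L)) *
        PowerSeries.mk (fun n => (minpoly K (a n)).map (algebraMap K L)) =
      (F : PowerSeries (Polynomial L)) := by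
  classical
  have := charZero_of_injective_algebraMap (algebraMap K L).injective
  simp_rw [minpoly_map_eq_prod_conjugates]
  exact (isLinRec_prod_conjugates ha.isLinRec Finset.univ).exists_mul_mk_eq
end

section
/- Let K be a field and L a finite Galois extension of K with Galois group G. Let (a_n)_{n≥0} be a sequence of elements of L. Assume that for each σ ∈ G, the set {n ∈ ℕ : σ(a_n) = a_n} is a virtually periodic subset of ℕ. Then the degree sequence (deg(a_n))_{n≥0}, where deg(a_n) = [K(a_n) : K], is virtually periodic. -/
/-!
By the Galois correspondence, `[K(x) : K]` is the index of the subgroup fixing `K(x)`, that is,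
of the stabilizer of `x`. Since the Galois group is finite, the product of the periods and the sum
of the thresholds of the sets `{n | σ (a n) = a n}` serve all `σ` at once, so the stabilizer of
`a n`, and with it the degree, is eventually periodic.
-/

/-- The degree of `K(x)` depends only on which automorphisms fix `x`. -/
lemma finrank_adjoin_eq_of_fixed_iff {K L : Type*} [Field K] [Field L]
    [Algebra K L] [IsGalois K L] {x y : L}
    (hxy : ∀ σ : L ≃ₐ[K] L, σ x = x ↔ σ y = y) :
    Module.finrank K ↥(IntermediateField.adjoin K {x}) =
      Module.finrank K ↥(IntermediateField.adjoin K {y}) := by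
  have key : (IntermediateField.adjoin K {x}).fixingSubgroup =
      (IntermediateField.adjoin K {y}).fixingSubgroup := by
    ext σ
    have hx := IntermediateField.forall_mem_adjoin_smul_eq_self_iff K (S := {x}) σ
    have hy := IntermediateField.forall_mem_adjoin_smul_eq_self_iff K (S := {y}) σ
    simp only [AlgEquiv.smul_def, Set.mem_singleton_iff, forall_eq] at hx hy
    rw [IntermediateField.mem_fixingSubgroup_iff, IntermediateField.mem_fixingSubgroup_iff,
      hx, hy, hxy σ]
  rw [IntermediateField.finrank_eq_fixingSubgroup_index,
    IntermediateField.finrank_eq_fixingSubgroup_index, key]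

/-- An eventual period can be replaced by any of its multiples. -/
lemma eventually_iff_add_mul {P : ℕ → Prop} {N r : ℕ}
    (hP : ∀ n > N, (P n ↔ P (n + r))) (k n : ℕ) (hn : n > N) : P n ↔ P (n + r * k) := by
  induction k with
  | zero => simp
  | succ k ih =>
    rw [ih, hP (n + r * k) (by omega), Nat.mul_succ, Nat.add_assoc]

/-- Let `L/K` be a finite Galois extension and `(aₙ)` a sequence in `L` such that
for each `σ` in the Galois group the set `{n | σ(aₙ) = aₙ}` is virtually periodic.
Then the degree sequence `[K(aₙ) : K]` is virtually periodic. -/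
theorem degree_seq_virtually_periodic_of_fixed_sets {K L : Type*} [Field K] [Field L]
    [Algebra K L] [FiniteDimensional K L] [IsGalois K L]
    (a : ℕ → L)
    (h : ∀ σ : L ≃ₐ[K] L, ∃ N r : ℕ, 0 < r ∧
      ∀ n > N, (σ (a n) = a n ↔ σ (a (n + r)) = a (n + r))) :
    ∃ N r : ℕ, 0 < r ∧ ∀ n > N,
      Module.finrank K ↥(IntermediateField.adjoin K {a (n + r)}) =
        Module.finrank K ↥(IntermediateField.adjoin K {a n}) := by
  choose N r hr hper using h
  refine ⟨∑ σ, N σ, ∏ σ, r σ, Finset.prod_pos fun σ _ => hr σ, fun n hn => ?_⟩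
  refine finrank_adjoin_eq_of_fixed_iff fun σ => ?_
  obtain ⟨k, hk⟩ := Finset.dvd_prod_of_mem r (Finset.mem_univ σ)
  have hN : N σ ≤ ∑ τ, N τ := Finset.single_le_sum_of_canonicallyOrdered (Finset.mem_univ σ)
  rw [hk]
  exact (eventually_iff_add_mul (P := fun m => σ (a m) = a m) (hper σ) k n (by omega)).symm
end
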